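/- Let N ≥ 1, p ∈ (2,∞), κ ∈ (0,1), s > 0, and suppose that 1/p > 1/2 - s/N, κ ≥ 1/2, and 1 - κ ≤ ((N+1)/2)(1/2 - 1/p). Then for every fixed R > 0 the constrained supremum sup{ Q_κ(u) : u ∈ H^s(ℝ^N) \ {0} and ‖(|D|^s - 1)u‖_{L²} ≤ R·‖u‖_{L²} } is finite. -/

import Mathlib

/-!
Put `ν = ‖u‖₂`, `d = ‖(|D|^s - 1)u‖₂`, `δ = d / ν ≤ R` and `a = 2(1 - κ)`. The weight
`V(ξ) = δ^a + δ^(a-2) (|ξ|^s - 1)²` is normalised so that `∫ V |û|² = 2 (ν^κ d^(1-κ))²`. By duality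
and Cauchy–Schwarz it therefore suffices to show, uniformly in `δ`, that
`∫ V⁻¹ |ĝ|² ≤ C ‖g‖_q²` for the conjugate exponent `q`. Now `V⁻¹` is at most a constant times
`δ |c_δ|^(-1-a) exp(-π|ξ|²) + (1 + |ξ|²)^(-s)`, where `c_δ(ξ) = δ - iπ(|ξ|² - 1)`.

Both terms are treated by Stein interpolation between `L² → L²` and `L¹ → L^∞`. The Bessel weight is
interpolated along its own complex powers. Since `a ≤ 1`, the weight near the sphere is dominated by
the real part of `c_δ^(-a) exp(-π|ξ|²)`, which lies on the holomorphic family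
`exp(z²) Γ(bz + 1) c_δ^(-bz) exp(-π|ξ|²)` at `bz = a`. On `Re z = 0` this family is bounded. On
`Re z = 1` its Fourier transform is bounded uniformly in `δ`: writing `c_δ^(-bz)` as a Gamma
integral makes the kernel a superposition of complex Gaussians, whose large times form an
oscillatory integral that is uniformly bounded after completing the square in the phase; this is
where `b ≤ (N + 1) / 2` enters.
-/

open MeasureTheory Filter Topology SchwartzMap

noncomputable section

abbrev Esp (N : ℕ) := EuclideanSpace ℝ (Fin N)

/-- An element of the Sobolev space `H^s(ℝ^N, ℂ)`: an `L²` function `u` together with (a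
representative of) its distributional Fourier transform `hat`, satisfying
`(1+|ξ|²)^{s/2}·hat ∈ L²`. The relation between `u` and `hat` is expressed by duality
against Schwartz functions (the multiplication formula `∫ u · 𝓕φ = ∫ û · φ`). -/
structure Hs (N : ℕ) (s : ℝ) where
  u : Esp N → ℂ
  hat : Esp N → ℂ
  u_mem : MemLp u 2 (volume : Measure (Esp N))
  hat_mem : MemLp (fun ξ => (((1 + ‖ξ‖ ^ 2) ^ (s / 2) : ℝ) : ℂ) * hat ξ) 2
    (volume : Measure (Esp N))
  fourier_spec : ∀ φ : SchwartzMap (Esp N) ℂ,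
    ∫ x, u x * (FourierTransform.fourierCLE ℂ (SchwartzMap (Esp N) ℂ) φ) x = ∫ ξ, hat ξ * φ ξ

/-- `u` does not vanish almost everywhere. -/
def Hs.Nontriv {N : ℕ} {s : ℝ} (U : Hs N s) : Prop :=
  ¬ (U.u =ᵐ[(volume : Measure (Esp N))] 0)

/-- `‖(|D|^s - 1) u‖_{L²}`: by Plancherel this is the `L²` norm of `(|ξ|^s - 1)·û`. -/
def dNorm {N : ℕ} {s : ℝ} (U : Hs N s) : ENNReal :=
  eLpNorm (fun ξ => ((‖ξ‖ ^ s - 1 : ℝ) : ℂ) * U.hat ξ) 2 (volume : Measure (Esp N))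

/-- The quotient `Q_κ(u) = ‖u‖_{L^p} / (‖u‖_{L²}^κ ‖(|D|^s - 1)u‖_{L²}^{1-κ})`,
computed in `[0,∞]`. -/
def Qquot {N : ℕ} {s : ℝ} (p κ : ℝ) (U : Hs N s) : ENNReal :=
  eLpNorm U.u (ENNReal.ofReal p) (volume : Measure (Esp N)) /
    (eLpNorm U.u 2 (volume : Measure (Esp N)) ^ κ * dNorm U ^ (1 - κ))

open scoped FourierTransform ENNReal

section FourierL2

variable {E F : Type*} [NormedAddCommGroup E] [InnerProductSpace ℝ E] [FiniteDimensional ℝ E]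
  [MeasurableSpace E] [BorelSpace E]

lemma continuous_fourier_of_integrable [NormedAddCommGroup F] [NormedSpace ℂ F] {f : E → F}
    (hf : Integrable f) : Continuous (𝓕 f) :=
  VectorFourier.fourierIntegral_continuous Real.continuous_fourierChar continuous_inner hf

lemma norm_fourier_le_integral_norm [NormedAddCommGroup F] [NormedSpace ℂ F] (f : E → F) (ξ : E) :
    ‖𝓕 f ξ‖ ≤ ∫ x, ‖f x‖ :=
  VectorFourier.norm_fourierIntegral_le_integral_norm _ _ _ _ _

lemma integral_fourier_mul {f g : E → ℂ} (hf : Integrable f) (hg : Integrable g) :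
    ∫ ξ, 𝓕 f ξ * g ξ = ∫ x, f x * 𝓕 g x :=
  VectorFourier.integral_bilin_fourierIntegral_eq_flip (ContinuousLinearMap.mul ℂ ℂ) (L := innerₗ E)
    Real.continuous_fourierChar continuous_inner hf hg |>.trans (by rw [flip_innerₗ]; rfl)

variable [NormedAddCommGroup F] [InnerProductSpace ℂ F] [CompleteSpace F]

lemma coeFn_fourier_toLp {f : E → F} (hf1 : Integrable f) (hf : MemLp f 2) :
    (𝓕 (hf.toLp f) : Lp F 2 (volume : Measure E)) =ᵐ[volume] 𝓕 f := by
  set G : Lp F 2 (volume : Measure E) := 𝓕 (hf.toLp f)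
  refine ae_eq_of_integral_contDiff_smul_eq
    ((Lp.memLp G).locallyIntegrable Fact.out)
    (continuous_fourier_of_integrable hf1).locallyIntegrable fun g hg hgc ↦ ?_
  have hgc' : HasCompactSupport fun x ↦ (g x : ℂ) := hgc.comp_left Complex.ofReal_zero
  let φ : 𝓢(E, ℂ) := hgc'.toSchwartzMap (Complex.ofRealCLM.contDiff.comp hg)
  have hφ : ∀ x (c : F), g x • c = φ x • c := fun x c ↦ (RCLike.real_smul_eq_coe_smul (K := ℂ) _ _)
  have key := DFunLike.congr_fun (Lp.fourier_toTemperedDistribution_eq (hf.toLp f)) φ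
  rw [TemperedDistribution.fourier_apply, Lp.toTemperedDistribution_apply,
    Lp.toTemperedDistribution_apply] at key
  simp only [hφ]
  rw [← key]
  calc ∫ x, (𝓕 φ) x • (hf.toLp f) x = ∫ x, 𝓕 (φ : E → ℂ) x • f x := by
        refine integral_congr_ae ?_
        filter_upwards [hf.coeFn_toLp] with x hx
        rw [hx, SchwartzMap.fourier_coe]
    _ = ∫ x, φ x • 𝓕 f x := by
        simpa using! VectorFourier.integral_fourierIntegral_smul_eq_flip (L := innerₗ E)
          Real.continuous_fourierChar continuous_inner φ.integrable hf1

lemma memLp_two_fourier {f : E → F} (hf1 : Integrable f) (hf : MemLp f 2) : MemLp (𝓕 f) 2 :=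
  (memLp_congr_ae (coeFn_fourier_toLp hf1 hf)).1 (Lp.memLp _)

lemma eLpNorm_two_fourier {f : E → F} (hf1 : Integrable f) (hf : MemLp f 2) :
    eLpNorm (𝓕 f) 2 = eLpNorm f 2 := by
  rw [← eLpNorm_congr_ae (coeFn_fourier_toLp hf1 hf), ← Lp.enorm_def,
    ← eLpNorm_congr_ae hf.coeFn_toLp, ← Lp.enorm_def, enorm_eq_iff_norm_eq, Lp.norm_fourier_eq]

lemma fourier_toLp_of_integral_fourier_smul_eq {f g : E → F} (hf : MemLp f 2) (hg : MemLp g 2)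
    (h : ∀ φ : 𝓢(E, ℂ), ∫ x, 𝓕 φ x • f x = ∫ ξ, φ ξ • g ξ) :
    𝓕 (hf.toLp f) = hg.toLp g := by
  refine LinearMap.ker_eq_bot.1
    (Lp.ker_toTemperedDistributionCLM_eq_bot (F := F) (μ := (volume : Measure E)) (p := 2)) ?_
  change ((𝓕 (hf.toLp f) : Lp F 2 (volume : Measure E)) : 𝓢'(E, F)) =
    ((hg.toLp g : Lp F 2 (volume : Measure E)) : 𝓢'(E, F))
  rw [← Lp.fourier_toTemperedDistribution_eq]
  ext φ
  rw [TemperedDistribution.fourier_apply, Lp.toTemperedDistribution_apply,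
    Lp.toTemperedDistribution_apply]
  calc ∫ x, 𝓕 φ x • (hf.toLp f) x = ∫ x, 𝓕 φ x • f x :=
        integral_congr_ae (hf.coeFn_toLp.mono fun x hx ↦ congrArg (𝓕 φ x • ·) hx)
    _ = ∫ ξ, φ ξ • g ξ := h φ
    _ = ∫ ξ, φ ξ • (hg.toLp g) ξ :=
        integral_congr_ae (hg.coeFn_toLp.mono fun x hx ↦ congrArg (φ x • ·) hx.symm)

lemma integral_inner_fourier_of_fourier_toLp {u v g : E → F} (hu : MemLp u 2) (hv : MemLp v 2)
    (huv : 𝓕 (hu.toLp u) = hv.toLp v) (hg1 : Integrable g) (hg : MemLp g 2) :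
    ∫ ξ, inner ℂ (𝓕 g ξ) (v ξ) = ∫ x, inner ℂ (g x) (u x) := by
  have key := Lp.inner_fourier_eq (hg.toLp g) (hu.toLp u)
  rw [huv, L2.inner_def, L2.inner_def] at key
  calc ∫ ξ, inner ℂ (𝓕 g ξ) (v ξ)
      = ∫ ξ, inner ℂ ((𝓕 (hg.toLp g) : Lp F 2 (volume : Measure E)) ξ) ((hv.toLp v) ξ) := by
        refine integral_congr_ae ?_
        filter_upwards [coeFn_fourier_toLp hg1 hg, hv.coeFn_toLp] with ξ hξ hξ'
        rw [hξ, hξ']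
    _ = ∫ x, inner ℂ ((hg.toLp g) x) ((hu.toLp u) x) := key
    _ = ∫ x, inner ℂ (g x) (u x) := by
        refine integral_congr_ae ?_
        filter_upwards [hg.coeFn_toLp, hu.coeFn_toLp] with x hx hx'
        rw [hx, hx']

end FourierL2

section HolomorphicIntegral

open Metric

variable {α H : Type*} [MeasurableSpace α] {μ : Measure α} [NormedAddCommGroup H] [NormedSpace ℂ H]
  {U : Set ℂ} {F : ℂ → α → H} {bound : α → ℝ}

lemma norm_slope_le_of_forall_norm_le {f : ℂ → H} {z z₀ : ℂ} {r B : ℝ}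
    (hf : DifferentiableOn ℂ f (ball z₀ r)) (hB : ∀ w ∈ ball z₀ r, ‖f w‖ ≤ B)
    (hz : z ∈ ball z₀ r) : ‖slope f z₀ z‖ ≤ 2 * B / r := by
  have hr : 0 < r := pos_of_mem_ball hz
  have hB₀ := hB z₀ (mem_ball_self hr)
  have hmaps : Set.MapsTo f (ball z₀ r) (closedBall (f z₀) (2 * B)) := fun w hw ↦ by
    rw [mem_closedBall, dist_eq_norm]
    exact (norm_sub_le _ _).trans (by linarith [hB w hw])
  have hdist := Complex.dist_le_div_mul_dist_of_mapsTo_ball hf hmaps hz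
  rw [slope_def_module, norm_smul, norm_inv, ← dist_eq_norm, ← dist_eq_norm]
  rcases eq_or_ne z z₀ with rfl | hne
  · simpa using div_nonneg (by linarith [norm_nonneg (f z)]) hr.le
  · rwa [inv_mul_le_iff₀ (dist_pos.2 hne), mul_comm]

lemma differentiableOn_integral_of_dominated (hU : IsOpen U) (hbound : Integrable bound μ)
    (hmeas : ∀ z ∈ U, AEStronglyMeasurable (F z) μ)
    (hle : ∀ᵐ a ∂μ, ∀ z ∈ U, ‖F z a‖ ≤ bound a)
    (hdiff : ∀ᵐ a ∂μ, DifferentiableOn ℂ (F · a) U) :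
    DifferentiableOn ℂ (fun z ↦ ∫ a, F z a ∂μ) U := by
  intro z₀ hz₀
  obtain ⟨r, hr, hball⟩ := isOpen_iff.1 hU z₀ hz₀
  have hint : ∀ z ∈ U, Integrable (F z) μ := fun z hz ↦
    hbound.mono' (hmeas z hz) (hle.mono fun a ha ↦ ha z hz)
  have hnear : ∀ᶠ z in 𝓝[≠] z₀, z ∈ ball z₀ r := mem_nhdsWithin_of_mem_nhds (ball_mem_nhds z₀ hr)
  suffices hasDeriv : HasDerivAt (fun z ↦ ∫ a, F z a ∂μ) (∫ a, deriv (F · a) z₀ ∂μ) z₀ from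
    hasDeriv.differentiableAt.differentiableWithinAt
  have hslope : (fun z ↦ ∫ a, slope (F · a) z₀ z ∂μ) =ᶠ[𝓝[≠] z₀]
      slope (fun z ↦ ∫ a, F z a ∂μ) z₀ := by
    filter_upwards [hnear] with z hz
    simp only [slope_def_module]
    rw [integral_smul, integral_sub (hint z (hball hz)) (hint z₀ hz₀)]
  rw [hasDerivAt_iff_tendsto_slope]
  refine Tendsto.congr' hslope
    (tendsto_integral_filter_of_dominated_convergence (fun a ↦ 2 * bound a / r) ?_ ?_ ?_ ?_)
  · filter_upwards [hnear] with z hz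
    simp only [slope_def_module]
    exact ((hmeas z (hball hz)).sub (hmeas z₀ hz₀)).const_smul _
  · filter_upwards [hnear] with z hz
    filter_upwards [hle, hdiff] with a ha hda
    exact norm_slope_le_of_forall_norm_le (hda.mono hball) (fun w hw ↦ ha w (hball hw)) hz
  · exact (hbound.const_mul 2).div_const r
  · filter_upwards [hdiff] with a hda
    exact hasDerivAt_iff_tendsto_slope.1 (hda.differentiableAt (hU.mem_nhds hz₀)).hasDerivAt

lemma diffContOnCl_integral_of_dominated (hU : IsOpen U) (hbound : Integrable bound μ)
    (hmeas : ∀ z ∈ closure U, AEStronglyMeasurable (F z) μ)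
    (hle : ∀ᵐ a ∂μ, ∀ z ∈ closure U, ‖F z a‖ ≤ bound a)
    (hdiff : ∀ᵐ a ∂μ, DiffContOnCl ℂ (F · a) U) :
    DiffContOnCl ℂ (fun z ↦ ∫ a, F z a ∂μ) U where
  differentiableOn := differentiableOn_integral_of_dominated hU hbound
    (fun z hz ↦ hmeas z (subset_closure hz)) (hle.mono fun _ ha z hz ↦ ha z (subset_closure hz))
    (hdiff.mono fun _ ha ↦ ha.differentiableOn)
  continuousOn := continuousOn_of_dominated hmeas
    (fun z hz ↦ hle.mono fun _ ha ↦ ha z hz) hbound (hdiff.mono fun _ ha ↦ ha.continuousOn)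

end HolomorphicIntegral

lemma eLpNorm_two_eq_ofReal_sqrt {α F : Type*} [MeasurableSpace α] {μ : Measure α}
    [NormedAddCommGroup F] {f : α → F} (hf : MemLp f 2 μ) :
    eLpNorm f 2 μ = ENNReal.ofReal √(∫ a, ‖f a‖ ^ 2 ∂μ) := by
  rw [hf.eLpNorm_eq_integral_rpow_norm two_ne_zero ENNReal.ofNat_ne_top]
  simp [Real.sqrt_eq_rpow]

section BilinearFourier

variable {E : Type*} [NormedAddCommGroup E] [InnerProductSpace ℝ E] [FiniteDimensional ℝ E]
  [MeasurableSpace E] [BorelSpace E] {m f g : E → ℂ} {M : ℝ}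

lemma fourier_fourierChar_mul (x y : E) :
    𝓕 (fun ξ ↦ (Real.fourierChar (-inner ℝ ξ x) : ℂ) * m ξ) y = 𝓕 m (x + y) := by
  simp only [Real.fourier_eq, Circle.smul_def, smul_eq_mul, ← mul_assoc, ← Circle.coe_mul,
    ← AddChar.map_add_eq_mul, inner_add_right, neg_add_rev]

lemma norm_integral_fourier_mul_le (hm : Integrable m) (hM : ∀ x, ‖𝓕 m x‖ ≤ M)
    (hf : Integrable f) : ‖∫ ξ, 𝓕 f ξ * m ξ‖ ≤ M * ∫ x, ‖f x‖ := by
  rw [integral_fourier_mul hf hm, ← integral_const_mul]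
  refine norm_integral_le_of_norm_le (hf.norm.const_mul M) (ae_of_all _ fun x ↦ ?_)
  rw [norm_mul, mul_comm]
  exact mul_le_mul_of_nonneg_right (hM x) (norm_nonneg _)

lemma norm_fourier_fourier_mul_le (hm : Integrable m) (hM : ∀ x, ‖𝓕 m x‖ ≤ M)
    (hf : Integrable f) (x : E) : ‖𝓕 (fun ξ ↦ 𝓕 f ξ * m ξ) x‖ ≤ M * ∫ y, ‖f y‖ := by
  have hchar : 𝓕 (fun ξ ↦ 𝓕 f ξ * m ξ) x =
      ∫ ξ, 𝓕 f ξ * ((Real.fourierChar (-inner ℝ ξ x) : ℂ) * m ξ) := by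
    rw [Real.fourier_eq]
    congr 1 with ξ
    rw [Circle.smul_def, smul_eq_mul]
    ring
  rw [hchar]
  refine norm_integral_fourier_mul_le ?_ (fun y ↦ ?_) hf
  · exact hm.bdd_mul (c := 1) (by fun_prop) (ae_of_all _ fun ξ ↦ (Circle.norm_coe _).le)
  · rw [fourier_fourierChar_mul]
    exact hM _

lemma norm_integral_mul_fourier_mul_fourier_le_L1 (hm : Integrable m) (hM : ∀ x, ‖𝓕 m x‖ ≤ M)
    (hf : Integrable f) (hg : Integrable g) :
    ‖∫ ξ, m ξ * 𝓕 f ξ * 𝓕 g ξ‖ ≤ M * ((∫ x, ‖f x‖) * ∫ x, ‖g x‖) := by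
  have hmf : Integrable fun ξ ↦ 𝓕 f ξ * m ξ :=
    hm.bdd_mul (continuous_fourier_of_integrable hf).aestronglyMeasurable
      (ae_of_all _ (norm_fourier_le_integral_norm f))
  calc ‖∫ ξ, m ξ * 𝓕 f ξ * 𝓕 g ξ‖ = ‖∫ ξ, 𝓕 g ξ * (𝓕 f ξ * m ξ)‖ := by
        congr 2 with ξ
        ring
    _ ≤ M * (∫ x, ‖f x‖) * ∫ x, ‖g x‖ :=
        norm_integral_fourier_mul_le hmf (norm_fourier_fourier_mul_le hm hM hf) hg
    _ = _ := mul_assoc _ _ _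

lemma integral_norm_fourier_sq (hf1 : Integrable f) (hf : MemLp f 2) :
    ∫ ξ, ‖𝓕 f ξ‖ ^ 2 = ∫ x, ‖f x‖ ^ 2 := by
  have key := eLpNorm_two_fourier hf1 hf
  rwa [eLpNorm_two_eq_ofReal_sqrt hf, eLpNorm_two_eq_ofReal_sqrt (memLp_two_fourier hf1 hf),
    ENNReal.ofReal_eq_ofReal_iff (by positivity) (by positivity),
    Real.sqrt_inj (by positivity) (by positivity)] at key

lemma norm_integral_mul_fourier_mul_fourier_le_L2 (hM : ∀ ξ, ‖m ξ‖ ≤ M)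
    (hf1 : Integrable f) (hf : MemLp f 2) (hg1 : Integrable g) (hg : MemLp g 2) :
    ‖∫ ξ, m ξ * 𝓕 f ξ * 𝓕 g ξ‖ ≤ M * (√(∫ x, ‖f x‖ ^ 2) * √(∫ x, ‖g x‖ ^ 2)) := by
  have hf' := memLp_two_fourier hf1 hf
  have hg' := memLp_two_fourier hg1 hg
  have hM₀ : 0 ≤ M := (norm_nonneg _).trans (hM 0)
  have hcs := integral_mul_norm_le_Lp_mul_Lq Real.HolderConjugate.two_two (f := 𝓕 f) (g := 𝓕 g)
    (by simpa using hf') (by simpa using hg')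
  simp only [Real.rpow_two, integral_norm_fourier_sq, ← Real.sqrt_eq_rpow, *] at hcs
  calc ‖∫ ξ, m ξ * 𝓕 f ξ * 𝓕 g ξ‖ ≤ ∫ ξ, M * (‖𝓕 f ξ‖ * ‖𝓕 g ξ‖) := by
        refine norm_integral_le_of_norm_le ((hf'.norm.integrable_mul hg'.norm).const_mul M)
          (ae_of_all _ fun ξ ↦ ?_)
        rw [norm_mul, norm_mul, mul_assoc]
        exact mul_le_mul_of_nonneg_right (hM ξ) (by positivity)
    _ = M * ∫ ξ, ‖𝓕 f ξ‖ * ‖𝓕 g ξ‖ := integral_const_mul _ _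
    _ ≤ _ := mul_le_mul_of_nonneg_left hcs hM₀

end BilinearFourier

section SteinInterpolation

open Complex.HadamardThreeLines

lemma rpow_le_rpow_add_rpow {x a b t : ℝ} (hx : 0 < x) (hat : a ≤ t) (htb : t ≤ b) :
    x ^ t ≤ x ^ a + x ^ b := by
  rcases le_total x 1 with h | h
  · linarith [Real.rpow_le_rpow_of_exponent_ge hx h hat, Real.rpow_pos_of_pos hx b]
  · linarith [Real.rpow_le_rpow_of_exponent_le h htb, Real.rpow_pos_of_pos hx a]

/-- The holomorphic deformation `z ↦ c |c| ^ ((z - θ) / (1 + θ))` of a complex number `c`: it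
passes through `c` at `z = θ` and has modulus `|c| ^ ((1 + Re z) / (1 + θ))`. Applied to the values
of a simple function `f ∈ L^{2/(1+θ)}`, it gives a holomorphic family that joins `L²` (on
`Re z = 0`) to `L¹` (on `Re z = 1`), as needed for Stein interpolation. -/
def twist (θ : ℝ) (z c : ℂ) : ℂ := c * (‖c‖ : ℂ) ^ ((z - θ) / (1 + θ))

lemma twist_zero (θ : ℝ) (z : ℂ) : twist θ z 0 = 0 := zero_mul _

lemma twist_self (θ : ℝ) (c : ℂ) : twist θ θ c = c := by simp [twist]

lemma differentiable_twist (θ : ℝ) (c : ℂ) : Differentiable ℂ (twist θ · c) := by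
  rcases eq_or_ne c 0 with rfl | hc
  · simp [twist_zero]
  · have hc' : (‖c‖ : ℂ) ≠ 0 := by exact_mod_cast norm_ne_zero_iff.2 hc
    exact .const_mul (.const_cpow (by fun_prop) (.inl hc')) c

lemma norm_twist {θ : ℝ} (hθ : 0 < θ) {z : ℂ} (hz : 0 ≤ z.re) (c : ℂ) :
    ‖twist θ z c‖ = ‖c‖ ^ ((1 + z.re) / (1 + θ)) := by
  rcases eq_or_ne c 0 with rfl | hc
  · rw [twist_zero, norm_zero, Real.zero_rpow (by positivity)]
  · have hexp : ((z - θ) / (1 + θ)).re = (z.re - θ) / (1 + θ) := by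
      rw [← Complex.ofReal_one, ← Complex.ofReal_add, Complex.div_ofReal_re]
      simp
    rw [twist, norm_mul, Complex.norm_cpow_eq_rpow_re_of_pos (norm_pos_iff.2 hc), hexp,
      ← Real.rpow_one_add' (norm_nonneg c)]
    · congr 1
      field_simp
      ring
    · have : 1 + (z.re - θ) / (1 + θ) = (1 + z.re) / (1 + θ) := by
        field_simp
        ring
      rw [this]
      positivity

lemma norm_twist_le {θ : ℝ} (hθ : 0 < θ) {z : ℂ} (hz : z ∈ verticalClosedStrip 0 1) (c : ℂ) :
    ‖twist θ z c‖ ≤ ‖c‖ ^ (1 / (1 + θ)) + ‖c‖ ^ (2 / (1 + θ)) := by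
  rcases eq_or_ne c 0 with rfl | hc
  · rw [twist_zero, norm_zero]
    positivity
  · rw [norm_twist hθ hz.1]
    exact rpow_le_rpow_add_rpow (norm_pos_iff.2 hc) (by gcongr; linarith [hz.1])
      (by gcongr; linarith [hz.2])

section SimpleFunc

variable {E : Type*} [NormedAddCommGroup E] [InnerProductSpace ℝ E] [FiniteDimensional ℝ E]
  [MeasurableSpace E] [BorelSpace E]

lemma simpleFunc_comp_eq_sum_indicator {α : Type*} [MeasurableSpace α] (f : SimpleFunc α ℂ)
    (T : ℂ → ℂ) (x : α) :
    T (f x) = ∑ c ∈ f.range, T c * (f ⁻¹' {c}).indicator 1 x := by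
  rw [Finset.sum_eq_single_of_mem (f x) (f.mem_range_self x)]
  · simp
  · intro c _ hc
    rw [Set.indicator_of_notMem (by simpa using hc.symm), mul_zero]

lemma memLp_indicator_preimage_singleton {α : Type*} [MeasurableSpace α] {μ : Measure α}
    {f : SimpleFunc α ℂ} (hf : Integrable f μ) {c : ℂ} (hc : c ≠ 0) (p : ℝ≥0∞) :
    MemLp ((f ⁻¹' {c}).indicator (1 : α → ℂ)) p μ :=
  memLp_indicator_const p (f.measurableSet_preimage _) 1
    (.inr (SimpleFunc.integrable_iff.1 hf c hc).ne)

lemma integrable_simpleFunc_comp {α F G : Type*} [MeasurableSpace α] [NormedAddCommGroup F]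
    [NormedAddCommGroup G] {μ : Measure α} {f : SimpleFunc α F} (hf : Integrable f μ) {T : F → G}
    (hT : T 0 = 0) : Integrable (fun x ↦ T (f x)) μ :=
  ((SimpleFunc.integrable_iff_finMeasSupp.1 hf).map hT).integrable

lemma memLp_simpleFunc_comp {α F G : Type*} [MeasurableSpace α] [NormedAddCommGroup F]
    [NormedAddCommGroup G] {μ : Measure α} {f : SimpleFunc α F} (hf : Integrable f μ) {T : F → G}
    (hT : T 0 = 0) {p : ℝ≥0∞} (hp₀ : p ≠ 0) (hp : p ≠ ∞) : MemLp (fun x ↦ T (f x)) p μ :=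
  (SimpleFunc.memLp_iff_integrable (f := f.map T) hp₀ hp).2 (integrable_simpleFunc_comp hf hT)

lemma fourier_simpleFunc_comp {f : SimpleFunc E ℂ} (hf : Integrable f) {T : ℂ → ℂ} (hT : T 0 = 0)
    (ξ : E) :
    𝓕 (fun x ↦ T (f x)) ξ = ∑ c ∈ f.range, T c * 𝓕 ((f ⁻¹' {c}).indicator (1 : E → ℂ)) ξ := by
  simp only [Real.fourier_eq, Circle.smul_def, smul_eq_mul, simpleFunc_comp_eq_sum_indicator f T,
    Finset.mul_sum, mul_left_comm _ (T _)]
  rw [integral_finsetSum]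
  · simp only [integral_const_mul]
  · intro c _
    rcases eq_or_ne c 0 with rfl | hc
    · simp [hT]
    · have hind := memLp_one_iff_integrable.1 (memLp_indicator_preimage_singleton hf hc 1)
      exact (hind.bdd_mul (c := 1) (by fun_prop)
        (ae_of_all _ fun x ↦ (Circle.norm_coe _).le)).const_mul (T c)

lemma differentiable_fourier_twist (θ : ℝ) {f : SimpleFunc E ℂ} (hf : Integrable f) (ξ : E) :
    Differentiable ℂ fun z ↦ 𝓕 (fun x ↦ twist θ z (f x)) ξ := by
  simp only [fourier_simpleFunc_comp hf (twist_zero θ _)]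
  exact .fun_sum fun c _ ↦ (differentiable_twist θ c).mul_const _

lemma exists_memLp_two_forall_norm_fourier_twist_le {θ : ℝ} (hθ : 0 < θ) {f : SimpleFunc E ℂ}
    (hf : Integrable f) : ∃ G : E → ℝ, MemLp G 2 ∧
      ∀ z ∈ verticalClosedStrip 0 1, ∀ ξ, ‖𝓕 (fun x ↦ twist θ z (f x)) ξ‖ ≤ G ξ := by
  refine ⟨fun ξ ↦ ∑ c ∈ f.range, (‖c‖ ^ (1 / (1 + θ)) + ‖c‖ ^ (2 / (1 + θ))) *
    ‖𝓕 ((f ⁻¹' {c}).indicator (1 : E → ℂ)) ξ‖, memLp_finsetSum _ fun c _ ↦ ?_,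
    fun z hz ξ ↦ ?_⟩
  · rcases eq_or_ne c 0 with rfl | hc
    · have h₁ : 1 / (1 + θ) ≠ 0 := by positivity
      have h₂ : 2 / (1 + θ) ≠ 0 := by positivity
      simp only [norm_zero, Real.zero_rpow h₁, Real.zero_rpow h₂, add_zero, zero_mul, MemLp.zero']
    · exact (memLp_two_fourier
        (memLp_one_iff_integrable.1 (memLp_indicator_preimage_singleton hf hc 1))
        (memLp_indicator_preimage_singleton hf hc 2)).norm.const_mul _
  · rw [fourier_simpleFunc_comp hf (twist_zero θ z)]
    refine norm_sum_le_of_le _ fun c _ ↦ ?_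
    rw [norm_mul]
    exact mul_le_mul_of_nonneg_right (norm_twist_le hθ hz c) (norm_nonneg _)

end SimpleFunc

section SteinFamily

lemma exists_simpleFunc_conj_comp_neg {E : Type*} [MeasurableSpace E] [Neg E] [MeasurableNeg E]
    (f : SimpleFunc E ℂ) :
    ∃ g : SimpleFunc E ℂ, ∀ x, g x = starRingEnd ℂ (f (-x)) :=
  ⟨(f.comp Neg.neg measurable_neg).map (starRingEnd ℂ), fun _ ↦ rfl⟩

variable {E : Type*} [NormedAddCommGroup E] [InnerProductSpace ℝ E] [MeasurableSpace E]

/-- A holomorphic family of Fourier multipliers on the strip `0 ≤ Re z ≤ 1` to which Stein's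
interpolation theorem applies: `m z` acts on `L²` with norm at most `M` when `Re z = 0`, and is the
Fourier transform of a kernel bounded by `M` when `Re z = 1`. Uniform boundedness on the strip
replaces the growth condition of the general theorem. -/
structure IsSteinFamily [BorelSpace E] [FiniteDimensional ℝ E] (m : ℂ → E → ℂ) (M : ℝ) : Prop where
  aestronglyMeasurable : ∀ z ∈ verticalClosedStrip 0 1, AEStronglyMeasurable (m z)
  diffContOnCl : ∀ ξ, DiffContOnCl ℂ (m · ξ) (verticalStrip 0 1)
  bounded : ∃ B, ∀ z ∈ verticalClosedStrip 0 1, ∀ ξ, ‖m z ξ‖ ≤ B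
  norm_le : ∀ z : ℂ, z.re = 0 → ∀ ξ, ‖m z ξ‖ ≤ M
  integrable : ∀ z : ℂ, z.re = 1 → Integrable (m z)
  norm_fourier_le : ∀ z : ℂ, z.re = 1 → ∀ x, ‖𝓕 (m z) x‖ ≤ M

variable [FiniteDimensional ℝ E] [BorelSpace E]

lemma fourier_conj_comp_neg (f : E → ℂ) (ξ : E) :
    𝓕 (fun x ↦ starRingEnd ℂ (f (-x))) ξ = starRingEnd ℂ (𝓕 f ξ) := by
  rw [Real.fourier_eq, Real.fourier_eq, ← integral_conj, ← integral_neg_eq_self]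
  congr 1 with x
  rw [Circle.smul_def, Circle.smul_def, smul_eq_mul, smul_eq_mul, map_mul, ← Circle.coe_inv_eq_conj,
    ← AddChar.map_neg_eq_inv, inner_neg_left, neg_neg, neg_neg]

lemma closure_verticalStrip_zero_one :
    closure (verticalStrip 0 1) = verticalClosedStrip 0 1 := by
  rw [verticalStrip, verticalClosedStrip, Complex.closure_preimage_re, closure_Ioo zero_ne_one]

/-- The bilinear form `∫ m_z 𝓕(f_z) 𝓕(g_z)` attached to a family of multipliers `m` and to the
twists `f_z`, `g_z` of two simple functions, to which the three lines theorem is applied. -/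
def twistedForm (m : ℂ → E → ℂ) (θ : ℝ) (f g : SimpleFunc E ℂ) (z : ℂ) : ℂ :=
  ∫ ξ, m z ξ * 𝓕 (fun x ↦ twist θ z (f x)) ξ * 𝓕 (fun x ↦ twist θ z (g x)) ξ

namespace IsSteinFamily

variable {m : ℂ → E → ℂ} {M θ : ℝ} {f g : SimpleFunc E ℂ}

lemma nonneg (hm : IsSteinFamily m M) : 0 ≤ M :=
  (norm_nonneg _).trans (hm.norm_le 0 Complex.zero_re 0)

lemma exists_integrable_bound (hm : IsSteinFamily m M) (hθ : 0 < θ) (hf : Integrable f)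
    (hg : Integrable g) : ∃ G : E → ℝ, Integrable G ∧ ∀ z ∈ verticalClosedStrip 0 1, ∀ ξ,
      ‖m z ξ * 𝓕 (fun x ↦ twist θ z (f x)) ξ * 𝓕 (fun x ↦ twist θ z (g x)) ξ‖ ≤ G ξ := by
  obtain ⟨B, hB⟩ := hm.bounded
  obtain ⟨F, hF, hfF⟩ := exists_memLp_two_forall_norm_fourier_twist_le hθ hf
  obtain ⟨G, hG, hgG⟩ := exists_memLp_two_forall_norm_fourier_twist_le hθ hg
  refine ⟨fun ξ ↦ B * (F ξ * G ξ), (hF.integrable_mul hG).const_mul B, fun z hz ξ ↦ ?_⟩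
  rw [mul_assoc, norm_mul, norm_mul]
  exact mul_le_mul (hB z hz ξ) (mul_le_mul (hfF z hz ξ) (hgG z hz ξ) (norm_nonneg _)
    ((norm_nonneg _).trans (hfF z hz ξ))) (by positivity) ((norm_nonneg _).trans (hB z hz ξ))

lemma integrable_integrand (hm : IsSteinFamily m M) (hθ : 0 < θ) (hf : Integrable f)
    (hg : Integrable g) {z : ℂ} (hz : z ∈ verticalClosedStrip 0 1) : Integrable fun ξ ↦
      m z ξ * 𝓕 (fun x ↦ twist θ z (f x)) ξ * 𝓕 (fun x ↦ twist θ z (g x)) ξ := by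
  obtain ⟨G, hG, hle⟩ := hm.exists_integrable_bound hθ hf hg
  have hcont : ∀ {h : SimpleFunc E ℂ}, Integrable h →
      AEStronglyMeasurable (𝓕 fun x ↦ twist θ z (h x)) := fun hh ↦
    (continuous_fourier_of_integrable
      (integrable_simpleFunc_comp hh (twist_zero θ z))).aestronglyMeasurable
  exact hG.mono' (((hm.aestronglyMeasurable z hz).mul (hcont hf)).mul (hcont hg))
    (ae_of_all _ (hle z hz))

lemma diffContOnCl_twistedForm (hm : IsSteinFamily m M) (hθ : 0 < θ) (hf : Integrable f)
    (hg : Integrable g) : DiffContOnCl ℂ (twistedForm m θ f g) (verticalStrip 0 1) := by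
  obtain ⟨G, hG, hle⟩ := hm.exists_integrable_bound hθ hf hg
  rw [← closure_verticalStrip_zero_one] at hle
  refine diffContOnCl_integral_of_dominated (isOpen_Ioo.preimage Complex.continuous_re) hG ?_
    (ae_of_all _ fun ξ z hz ↦ hle z hz ξ) (ae_of_all _ fun ξ ↦ ?_)
  · rw [closure_verticalStrip_zero_one]
    exact fun z hz ↦ (hm.integrable_integrand hθ hf hg hz).aestronglyMeasurable
  · exact ((hm.diffContOnCl ξ).smul (differentiable_fourier_twist θ hf ξ).diffContOnCl).smul
      (differentiable_fourier_twist θ hg ξ).diffContOnCl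

lemma norm_twistedForm_le_of_re_eq_zero (hm : IsSteinFamily m M) (hθ : 0 < θ)
    (hf : Integrable f) (hg : Integrable g) {z : ℂ} (hz : z.re = 0) :
    ‖twistedForm m θ f g z‖ ≤
      M * (√(∫ x, ‖f x‖ ^ (2 / (1 + θ))) * √(∫ x, ‖g x‖ ^ (2 / (1 + θ)))) := by
  have hsq : ∀ c, ‖twist θ z c‖ ^ 2 = ‖c‖ ^ (2 / (1 + θ)) := fun c ↦ by
    rw [norm_twist hθ hz.ge, hz, ← Real.rpow_mul_natCast (norm_nonneg c)]
    congr 1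
    push_cast
    ring
  have hint : ∀ {h : SimpleFunc E ℂ}, Integrable h → Integrable (fun x ↦ twist θ z (h x)) ∧
      MemLp (fun x ↦ twist θ z (h x)) 2 := fun hh ↦
    ⟨integrable_simpleFunc_comp hh (twist_zero θ z),
      memLp_simpleFunc_comp hh (twist_zero θ z) two_ne_zero ENNReal.ofNat_ne_top⟩
  simpa only [twistedForm, hsq] using norm_integral_mul_fourier_mul_fourier_le_L2 (hm.norm_le z hz)
    (hint hf).1 (hint hf).2 (hint hg).1 (hint hg).2

lemma norm_twistedForm_le_of_re_eq_one (hm : IsSteinFamily m M) (hθ : 0 < θ)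
    (hf : Integrable f) (hg : Integrable g) {z : ℂ} (hz : z.re = 1) :
    ‖twistedForm m θ f g z‖ ≤
      M * ((∫ x, ‖f x‖ ^ (2 / (1 + θ))) * ∫ x, ‖g x‖ ^ (2 / (1 + θ))) := by
  have hnorm : ∀ c, ‖twist θ z c‖ = ‖c‖ ^ (2 / (1 + θ)) := fun c ↦ by
    rw [norm_twist hθ (by simp [hz]), hz, one_add_one_eq_two]
  simpa only [twistedForm, hnorm] using norm_integral_mul_fourier_mul_fourier_le_L1
    (hm.integrable z hz) (hm.norm_fourier_le z hz) (integrable_simpleFunc_comp hf (twist_zero θ z))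
    (integrable_simpleFunc_comp hg (twist_zero θ z))

lemma bddAbove_norm_twistedForm (hm : IsSteinFamily m M) (hθ : 0 < θ) (hf : Integrable f)
    (hg : Integrable g) :
    BddAbove ((norm ∘ twistedForm m θ f g) '' verticalClosedStrip 0 1) := by
  obtain ⟨G, hG, hle⟩ := hm.exists_integrable_bound hθ hf hg
  refine ⟨∫ ξ, G ξ, ?_⟩
  rintro _ ⟨z, hz, rfl⟩
  exact norm_integral_le_of_norm_le hG (ae_of_all _ (hle z hz))

lemma norm_twistedForm_self_le (hm : IsSteinFamily m M) (hθ : 0 < θ) (hθ₁ : θ < 1)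
    (hf : Integrable f) (hg : Integrable g) :
    ‖twistedForm m θ f g θ‖ ≤ M *
      ((∫ x, ‖f x‖ ^ (2 / (1 + θ))) * ∫ x, ‖g x‖ ^ (2 / (1 + θ))) ^ ((1 + θ) / 2) := by
  set A := (∫ x, ‖f x‖ ^ (2 / (1 + θ))) * ∫ x, ‖g x‖ ^ (2 / (1 + θ)) with hA
  have hA₀ : 0 ≤ A := by positivity
  have hM := hm.nonneg
  have hθmem : (θ : ℂ) ∈ verticalClosedStrip 0 1 := ⟨by simpa using hθ.le, by simpa using hθ₁.le⟩
  calc ‖twistedForm m θ f g θ‖ ≤ (M * √A) ^ (1 - θ) * (M * A) ^ θ := by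
        refine norm_le_interp_of_mem_verticalClosedStrip₀₁' _ hθmem
          (hm.diffContOnCl_twistedForm hθ hf hg) (hm.bddAbove_norm_twistedForm hθ hf hg)
          (fun z hz ↦ ?_) (fun z hz ↦ hm.norm_twistedForm_le_of_re_eq_one hθ hf hg hz)
        rw [hA, Real.sqrt_mul (by positivity)]
        exact hm.norm_twistedForm_le_of_re_eq_zero hθ hf hg hz
    _ = (M ^ (1 - θ) * M ^ θ) * (A ^ ((1 - θ) / 2) * A ^ θ) := by
        rw [Real.mul_rpow hM (Real.sqrt_nonneg A), Real.mul_rpow hM hA₀, Real.sqrt_eq_rpow,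
          ← Real.rpow_mul hA₀]
        ring_nf
    _ = M * A ^ ((1 + θ) / 2) := by
        have hexp : (1 - θ) / 2 + θ = (1 + θ) / 2 := by ring
        rw [← Real.rpow_add_of_nonneg hM (by linarith) hθ.le,
          ← Real.rpow_add_of_nonneg hA₀ (by linarith) hθ.le, hexp, sub_add_cancel, Real.rpow_one]

theorem integral_mul_norm_fourier_sq_le (hm : IsSteinFamily m M) (hθ : 0 < θ) (hθ₁ : θ < 1)
    {w : E → ℝ} (hw₀ : ∀ ξ, 0 ≤ w ξ) (hw : ∀ ξ, w ξ ≤ (m θ ξ).re) (hf : Integrable f) :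
    ∫ ξ, w ξ * ‖𝓕 (f : E → ℂ) ξ‖ ^ 2 ≤ M * (∫ x, ‖f x‖ ^ (2 / (1 + θ))) ^ (1 + θ) := by
  obtain ⟨g, hgf⟩ := exists_simpleFunc_conj_comp_neg f
  have hgf' : (g : E → ℂ) = fun x ↦ starRingEnd ℂ (f (-x)) := funext hgf
  have hg : Integrable g := hgf' ▸ Complex.conjCLE.toContinuousLinearMap.integrable_comp hf.comp_neg
  have hθmem : (θ : ℂ) ∈ verticalClosedStrip 0 1 := ⟨by simpa using hθ.le, by simpa using hθ₁.le⟩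
  have hform : ∀ ξ, m θ ξ * 𝓕 (fun x ↦ twist θ θ (f x)) ξ * 𝓕 (fun x ↦ twist θ θ (g x)) ξ =
      m θ ξ * ((‖𝓕 (f : E → ℂ) ξ‖ ^ 2 : ℝ) : ℂ) := fun ξ ↦ by
    simp only [twist_self, hgf, fourier_conj_comp_neg, mul_assoc, Complex.mul_conj']
    norm_cast
  have hint := hm.integrable_integrand hθ hf hg hθmem
  have hle := hm.norm_twistedForm_self_le hθ hθ₁ hf hg
  have hnorm : ∫ x, ‖g x‖ ^ (2 / (1 + θ)) = ∫ x, ‖f x‖ ^ (2 / (1 + θ)) := by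
    simp only [hgf, RCLike.norm_conj]
    exact integral_neg_eq_self (fun x ↦ ‖f x‖ ^ (2 / (1 + θ))) volume
  simp only [twistedForm, hform, hnorm] at hint hle
  calc ∫ ξ, w ξ * ‖𝓕 (f : E → ℂ) ξ‖ ^ 2
      ≤ ∫ ξ, (m θ ξ * ((‖𝓕 (f : E → ℂ) ξ‖ ^ 2 : ℝ) : ℂ)).re := by
        refine integral_mono_of_nonneg (ae_of_all _ fun ξ ↦ mul_nonneg (hw₀ ξ) (sq_nonneg _))
          hint.re (ae_of_all _ fun ξ ↦ ?_)
        change _ ≤ (m θ ξ * ((‖𝓕 (f : E → ℂ) ξ‖ ^ 2 : ℝ) : ℂ)).re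
        rw [Complex.re_mul_ofReal]
        exact mul_le_mul_of_nonneg_right (hw ξ) (sq_nonneg _)
    _ = (∫ ξ, m θ ξ * ((‖𝓕 (f : E → ℂ) ξ‖ ^ 2 : ℝ) : ℂ)).re := integral_re hint
    _ ≤ _ := (Complex.re_le_norm _).trans hle
    _ = M * (∫ x, ‖f x‖ ^ (2 / (1 + θ))) ^ (1 + θ) := by
        rw [Real.mul_rpow (by positivity) (by positivity), ← Real.rpow_add_of_nonneg
          (by positivity) (by positivity) (by positivity), add_halves]

end IsSteinFamily

end SteinFamily
end SteinInterpolation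

section HighFrequency

open Complex.HadamardThreeLines

variable {E : Type*} [NormedAddCommGroup E]

/-- The family of Bessel multipliers `(1 + ‖ξ‖²)^(-σz)`, used for the frequencies away from the
unit sphere. -/
def besselFamily (σ : ℝ) (z : ℂ) (ξ : E) : ℂ := ((1 + ‖ξ‖ ^ 2 : ℝ) : ℂ) ^ (-(σ * z))

lemma norm_besselFamily (σ : ℝ) (z : ℂ) (ξ : E) :
    ‖besselFamily σ z ξ‖ = (1 + ‖ξ‖ ^ 2) ^ (-(σ * z.re)) := by
  rw [besselFamily, Complex.norm_cpow_eq_rpow_re_of_pos (by positivity), Complex.neg_re,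
    Complex.re_ofReal_mul]

lemma norm_besselFamily_le_one {σ : ℝ} (hσ : 0 ≤ σ) {z : ℂ} (hz : 0 ≤ z.re) (ξ : E) :
    ‖besselFamily σ z ξ‖ ≤ 1 := by
  rw [norm_besselFamily]
  exact Real.rpow_le_one_of_one_le_of_nonpos (le_add_of_nonneg_right (sq_nonneg _))
    (neg_nonpos.2 (mul_nonneg hσ hz))

lemma continuous_besselFamily (σ : ℝ) (z : ℂ) : Continuous (besselFamily (E := E) σ z) := by
  refine Continuous.cpow (by fun_prop) continuous_const fun ξ ↦ Or.inl ?_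
  rw [Complex.ofReal_re]
  positivity

lemma differentiable_besselFamily (σ : ℝ) (ξ : E) :
    Differentiable ℂ (besselFamily σ · ξ) := by
  have hne : ((1 + ‖ξ‖ ^ 2 : ℝ) : ℂ) ≠ 0 := Complex.ofReal_ne_zero.2 (by positivity)
  exact Differentiable.const_cpow (by fun_prop) (Or.inl hne)

variable [InnerProductSpace ℝ E] [FiniteDimensional ℝ E] [MeasurableSpace E] [BorelSpace E]

lemma isSteinFamily_besselFamily {σ : ℝ} (hσ : Module.finrank ℝ E < 2 * σ) :
    IsSteinFamily (besselFamily (E := E) σ) (max 1 (∫ ξ : E, (1 + ‖ξ‖ ^ 2) ^ (-σ))) := by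
  have hσ₀ : 0 ≤ σ := by linarith [(Module.finrank ℝ E).cast_nonneg (α := ℝ)]
  have hint : Integrable fun ξ : E ↦ (1 + ‖ξ‖ ^ 2) ^ (-σ) := by
    convert integrable_rpow_neg_one_add_norm_sq (E := E) (μ := volume) hσ using 3
    ring
  have hnorm : ∀ z : ℂ, z.re = 1 → ∀ ξ : E, ‖besselFamily σ z ξ‖ = (1 + ‖ξ‖ ^ 2) ^ (-σ) :=
    fun z hz ξ ↦ by rw [norm_besselFamily, hz, mul_one]
  exact {
    aestronglyMeasurable := fun z _ ↦ (continuous_besselFamily σ z).aestronglyMeasurable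
    diffContOnCl := fun ξ ↦ (differentiable_besselFamily σ ξ).diffContOnCl
    bounded := ⟨1, fun z hz ↦ norm_besselFamily_le_one hσ₀ hz.1⟩
    norm_le := fun z hz ξ ↦ (norm_besselFamily_le_one hσ₀ hz.ge ξ).trans (le_max_left _ _)
    integrable := fun z hz ↦ hint.mono' (continuous_besselFamily σ z).aestronglyMeasurable
      (ae_of_all _ fun ξ ↦ (hnorm z hz ξ).le)
    norm_fourier_le := fun z hz x ↦ (norm_fourier_le_integral_norm _ x).trans <| by
      simp only [hnorm z hz, le_max_right] }

theorem integral_rpow_mul_norm_fourier_sq_le {s θ : ℝ} (hθ : 0 < θ) (hθ₁ : θ < 1)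
    (hs : Module.finrank ℝ E * θ < 2 * s) {f : SimpleFunc E ℂ} (hf : Integrable f) :
    ∫ ξ, (1 + ‖ξ‖ ^ 2) ^ (-s) * ‖𝓕 (f : E → ℂ) ξ‖ ^ 2 ≤
      max 1 (∫ ξ : E, (1 + ‖ξ‖ ^ 2) ^ (-(s / θ))) *
        (∫ x, ‖f x‖ ^ (2 / (1 + θ))) ^ (1 + θ) := by
  have hσ : Module.finrank ℝ E < 2 * (s / θ) := by rwa [← mul_div_assoc, lt_div_iff₀ hθ]
  refine (isSteinFamily_besselFamily hσ).integral_mul_norm_fourier_sq_le hθ hθ₁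
    (fun ξ ↦ by positivity) (fun ξ ↦ le_of_eq ?_) hf
  rw [besselFamily, ← Complex.ofReal_mul, div_mul_cancel₀ s hθ.ne', ← Complex.ofReal_neg,
    ← Complex.ofReal_cpow (by positivity), Complex.ofReal_re]

end HighFrequency

section Oscillation

lemma norm_sub_le_sub_of_norm_deriv_le {V : Type*} [NormedAddCommGroup V] [NormedSpace ℝ V]
    {f f' : ℝ → V} {g g' : ℝ → ℝ} {a b : ℝ} (hab : a ≤ b)
    (hf : ∀ x ∈ Set.Icc a b, HasDerivAt f (f' x) x) (hg : ∀ x ∈ Set.Icc a b, HasDerivAt g (g' x) x)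
    (hle : ∀ x ∈ Set.Icc a b, ‖f' x‖ ≤ g' x) : ‖f b - f a‖ ≤ g b - g a :=
  have hIcc {x : ℝ} (hx : x ∈ Set.Ico a b) : x ∈ Set.Icc a b := Set.Ico_subset_Icc_self hx
  image_norm_le_of_norm_deriv_right_le_deriv_boundary' (f := fun x ↦ f x - f a)
    (B := fun x ↦ g x - g a)
    (fun x hx ↦ ((hf x hx).sub_const _).continuousAt.continuousWithinAt)
    (fun x hx ↦ ((hf x (hIcc hx)).sub_const _).hasDerivWithinAt) (by simp)
    (fun x hx ↦ ((hg x hx).sub_const _).continuousAt.continuousWithinAt)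
    (fun x hx ↦ ((hg x (hIcc hx)).sub_const _).hasDerivWithinAt)
    (fun x hx ↦ hle x (hIcc hx)) ⟨hab, le_rfl⟩

/-- The integrand `exp(-iπv²)` of the Fresnel integral. -/
def chirp (v : ℝ) : ℂ := Complex.exp ((-(Real.pi * v ^ 2) : ℝ) * Complex.I)

lemma norm_chirp (v : ℝ) : ‖chirp v‖ = 1 := Complex.norm_exp_ofReal_mul_I _

lemma continuous_chirp : Continuous chirp := by unfold chirp; fun_prop

/-- A bounded function whose derivative is `-2πi` times the chirp up to an integrable error, see
`hasDerivAt_fresnelCorrector`. -/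
def fresnelCorrector (v : ℝ) : ℂ := (v / (1 + v ^ 2) : ℝ) * chirp v

/-- The error term in `hasDerivAt_fresnelCorrector`. -/
def fresnelError (v : ℝ) : ℂ :=
  ((1 - v ^ 2) / (1 + v ^ 2) ^ 2 : ℝ) + (2 * Real.pi / (1 + v ^ 2) : ℝ) * Complex.I

lemma hasDerivAt_fresnelCorrector (v : ℝ) : HasDerivAt fresnelCorrector
    (chirp v * (fresnelError v - 2 * Real.pi * Complex.I)) v := by
  have hne : (1 + (v : ℂ) ^ 2) ≠ 0 := by exact_mod_cast (by positivity : 1 + v ^ 2 ≠ 0)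
  have hsq : HasDerivAt (fun v : ℝ ↦ v ^ 2) (2 * v) v := by simpa using hasDerivAt_pow 2 v
  have hdiv := ((hasDerivAt_id v).div (hsq.const_add 1) (by positivity)).ofReal_comp
  have hexp := ((hsq.const_mul Real.pi).neg.ofReal_comp.mul_const Complex.I).cexp
  refine (hdiv.mul hexp).congr_deriv ?_
  simp only [id_eq, Pi.div_apply, Pi.neg_apply, fresnelError, chirp]
  push_cast
  field_simp
  ring

lemma norm_fresnelCorrector (v : ℝ) : ‖fresnelCorrector v‖ = |v| / (1 + v ^ 2) := by
  rw [fresnelCorrector, norm_mul, norm_chirp, mul_one, Complex.norm_real, Real.norm_eq_abs, abs_div,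
    abs_of_pos (by positivity : 0 < 1 + v ^ 2)]

lemma norm_fresnelCorrector_le (v : ℝ) : ‖fresnelCorrector v‖ ≤ 1 / 2 := by
  rw [norm_fresnelCorrector, div_le_div_iff₀ (by positivity) two_pos]
  nlinarith [sq_nonneg (|v| - 1), sq_abs v]

lemma norm_fresnelError_le (v : ℝ) : ‖fresnelError v‖ ≤ 9 / (1 + v ^ 2) := by
  have hre : |(1 - v ^ 2) / (1 + v ^ 2) ^ 2| ≤ 1 / (1 + v ^ 2) := by
    rw [abs_div, abs_of_pos (by positivity : 0 < (1 + v ^ 2) ^ 2), div_le_div_iff₀ (by positivity)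
      (by positivity), one_mul, sq (1 + v ^ 2)]
    gcongr
    exact abs_le.2 ⟨by linarith, by linarith [sq_nonneg v]⟩
  have him : |2 * Real.pi / (1 + v ^ 2)| ≤ 8 / (1 + v ^ 2) := by
    rw [abs_of_pos (by positivity)]
    gcongr
    linarith [Real.pi_lt_four]
  calc ‖fresnelError v‖
      ≤ |(1 - v ^ 2) / (1 + v ^ 2) ^ 2| + |2 * Real.pi / (1 + v ^ 2)| := by
        refine (norm_add_le _ _).trans_eq ?_
        rw [norm_mul, Complex.norm_I, mul_one, Complex.norm_real, Complex.norm_real,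
          Real.norm_eq_abs, Real.norm_eq_abs]
    _ ≤ 1 / (1 + v ^ 2) + 8 / (1 + v ^ 2) := add_le_add hre him
    _ = 9 / (1 + v ^ 2) := by ring

/-- The substitution `v = w - r/w`, which turns the phase `w² + r²/w²` into `v²` up to a constant
and maps the stationary point `w = √r` to the origin. -/
def saddleCoord (r w : ℝ) : ℝ := w - r / w

/-- The reciprocal `w²/(w² + r)` of the derivative of `saddleCoord r`. -/
def saddleWeight (r w : ℝ) : ℝ := w ^ 2 / (w ^ 2 + r)

section Saddle

variable {r w : ℝ}

lemma hasDerivAt_saddleCoord (hw : w ≠ 0) : HasDerivAt (saddleCoord r) (1 + r / w ^ 2) w :=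
  ((hasDerivAt_id w).sub ((hasDerivAt_inv hw).const_mul r)).congr_deriv (by ring)

lemma abs_saddleCoord_le (hr : 0 ≤ r) (hw : 0 < w) : |saddleCoord r w| ≤ w * (1 + r / w ^ 2) := by
  have hrw : 0 ≤ r / w := by positivity
  have hmul : w * (1 + r / w ^ 2) = w + r / w := by field_simp
  rw [hmul, saddleCoord]
  exact abs_le.2 ⟨by linarith, by linarith⟩

lemma hasDerivAt_saddleWeight (hr : 0 ≤ r) (hw : w ≠ 0) :
    HasDerivAt (saddleWeight r) (2 * w * r / (w ^ 2 + r) ^ 2) w := by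
  have hsq : HasDerivAt (fun w : ℝ ↦ w ^ 2) (2 * w) w := by simpa using hasDerivAt_pow 2 w
  exact (hsq.div (hsq.add_const r) (by positivity)).congr_deriv (by ring)

lemma saddleWeight_mul (hr : 0 ≤ r) (hw : w ≠ 0) : saddleWeight r w * (1 + r / w ^ 2) = 1 := by
  have hne : w ^ 2 + r ≠ 0 := by positivity
  rw [saddleWeight]
  field_simp

lemma saddleWeight_nonneg (hr : 0 ≤ r) (w : ℝ) : 0 ≤ saddleWeight r w := by
  unfold saddleWeight
  positivity

lemma saddleWeight_le_one (hr : 0 ≤ r) (w : ℝ) : saddleWeight r w ≤ 1 :=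
  div_le_one_of_le₀ (by linarith) (by positivity)

variable {B : ℝ → ℂ} {B' : ℂ} {M : ℝ}

lemma hasDerivAt_mul_saddleWeight_mul_fresnelCorrector (hr : 0 ≤ r) (hw : w ≠ 0)
    (hB : HasDerivAt B B' w) :
    HasDerivAt (fun w ↦ B w * (saddleWeight r w * fresnelCorrector (saddleCoord r w)))
      (B' * (saddleWeight r w * fresnelCorrector (saddleCoord r w)) +
        B w * ((2 * w * r / (w ^ 2 + r) ^ 2 : ℝ) * fresnelCorrector (saddleCoord r w)) +
        B w * (chirp (saddleCoord r w) * (fresnelError (saddleCoord r w) -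
          2 * Real.pi * Complex.I))) w := by
  have hcorr := HasDerivAt.scomp w (hasDerivAt_fresnelCorrector (saddleCoord r w))
    (hasDerivAt_saddleCoord (r := r) hw)
  refine (hB.mul ((hasDerivAt_saddleWeight hr hw).ofReal_comp.mul hcorr)).congr_deriv ?_
  have hmul : (saddleWeight r w : ℂ) * ((1 + r / w ^ 2 : ℝ) : ℂ) = 1 := by
    exact_mod_cast saddleWeight_mul hr hw
  rw [Complex.real_smul]
  simp only [Function.comp_apply, Pi.mul_apply]
  linear_combination (B w * (chirp (saddleCoord r w) * (fresnelError (saddleCoord r w) -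
    2 * Real.pi * Complex.I))) * hmul

lemma norm_mul_saddleWeight_mul_fresnelCorrector_le (hr : 0 ≤ r) {b : ℂ} (hb : ‖b‖ ≤ 1) (w : ℝ) :
    ‖b * (saddleWeight r w * fresnelCorrector (saddleCoord r w))‖ ≤ 1 / 2 := by
  rw [norm_mul, norm_mul, Complex.norm_real, Real.norm_of_nonneg (saddleWeight_nonneg hr w)]
  calc ‖b‖ * (saddleWeight r w * ‖fresnelCorrector (saddleCoord r w)‖) ≤ 1 * (1 * (1 / 2)) := by
        have := saddleWeight_nonneg hr w
        gcongr
        exacts [saddleWeight_le_one hr w, norm_fresnelCorrector_le _]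
    _ = 1 / 2 := by norm_num

lemma norm_deriv_amplitude_mul_fresnelCorrector_le (hr : 0 ≤ r) (hw : 0 < w) (hB' : ‖B'‖ ≤ M / w) :
    ‖B' * (saddleWeight r w * fresnelCorrector (saddleCoord r w))‖ ≤
      M / (1 + saddleCoord r w ^ 2) := by
  have habs : saddleWeight r w * |saddleCoord r w| ≤ w :=
    calc saddleWeight r w * |saddleCoord r w| ≤ saddleWeight r w * (w * (1 + r / w ^ 2)) :=
          mul_le_mul_of_nonneg_left (abs_saddleCoord_le hr hw) (saddleWeight_nonneg hr w)
      _ = w * (saddleWeight r w * (1 + r / w ^ 2)) := by ring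
      _ = w := by rw [saddleWeight_mul hr hw.ne', mul_one]
  rw [norm_mul, norm_mul, Complex.norm_real, Real.norm_of_nonneg (saddleWeight_nonneg hr w),
    norm_fresnelCorrector, ← mul_div_assoc]
  calc ‖B'‖ * (saddleWeight r w * |saddleCoord r w| / (1 + saddleCoord r w ^ 2))
      ≤ M / w * (w / (1 + saddleCoord r w ^ 2)) := by
        have := (norm_nonneg B').trans hB'
        have := saddleWeight_nonneg hr w
        gcongr
    _ = M / (1 + saddleCoord r w ^ 2) := by field_simp

lemma norm_saddle_error_le (hr : 0 ≤ r) (hw : 0 < w) {b : ℂ} (hb : ‖b‖ ≤ 1) (hB' : ‖B'‖ ≤ M / w) :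
    ‖B' * (saddleWeight r w * fresnelCorrector (saddleCoord r w)) +
        b * ((2 * w * r / (w ^ 2 + r) ^ 2 : ℝ) * fresnelCorrector (saddleCoord r w)) +
        b * (chirp (saddleCoord r w) * fresnelError (saddleCoord r w))‖ ≤
      (M + 9) * (1 / (1 + saddleCoord r w ^ 2) * (1 + r / w ^ 2)) +
        2 * w * r / (w ^ 2 + r) ^ 2 := by
  set v := saddleCoord r w
  set K := 2 * w * r / (w ^ 2 + r) ^ 2
  have hK : 0 ≤ K := by positivity
  have hM : 0 ≤ M := by
    have := (norm_nonneg B').trans hB'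
    rwa [le_div_iff₀ hw, zero_mul] at this
  have hweight : ‖b * ((K : ℂ) * fresnelCorrector v)‖ ≤ K := by
    rw [norm_mul, norm_mul, Complex.norm_real, Real.norm_of_nonneg hK]
    calc ‖b‖ * (K * ‖fresnelCorrector v‖) ≤ 1 * (K * (1 / 2)) := by
          gcongr
          exact norm_fresnelCorrector_le v
      _ ≤ K := by linarith
  have herror : ‖b * (chirp v * fresnelError v)‖ ≤ 9 / (1 + v ^ 2) := by
    rw [norm_mul, norm_mul, norm_chirp, one_mul]
    exact (mul_le_of_le_one_left (norm_nonneg _) hb).trans (norm_fresnelError_le v)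
  calc _ ≤ M / (1 + v ^ 2) + K + 9 / (1 + v ^ 2) := norm_add_le_of_le
        (norm_add_le_of_le (norm_deriv_amplitude_mul_fresnelCorrector_le hr hw hB') hweight) herror
    _ = (M + 9) * (1 / (1 + v ^ 2) * 1) + K := by ring
    _ ≤ (M + 9) * (1 / (1 + v ^ 2) * (1 + r / w ^ 2)) + K := by
        gcongr
        exact le_add_of_nonneg_right (by positivity)

end Saddle

lemma hasDerivAt_intervalIntegral_of_continuousOn_Ioi {f : ℝ → ℂ} (hf : ContinuousOn f (Set.Ioi 0))
    {a w : ℝ} (ha : 0 < a) (hw : 0 < w) : HasDerivAt (fun W ↦ ∫ x in a..W, f x) (f w) w := by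
  refine intervalIntegral.integral_hasDerivAt_right ?_
    (hf.stronglyMeasurableAtFilter isOpen_Ioi w hw) (hf.continuousAt (Ioi_mem_nhds hw))
  exact (hf.mono fun x hx ↦ (lt_min ha hw).trans_le hx.1).intervalIntegrable

lemma arctan_sub_arctan_le_pi (x y : ℝ) : Real.arctan x - Real.arctan y ≤ Real.pi := by
  linarith [Real.arctan_lt_pi_div_two x, Real.neg_pi_div_two_lt_arctan y]

theorem norm_intervalIntegral_mul_chirp_saddleCoord_le {B B' : ℝ → ℂ} {r M : ℝ} (hr : 0 ≤ r)
    (hB : ∀ w, 0 < w → HasDerivAt B (B' w) w) (hB₁ : ∀ w, 1 ≤ w → ‖B w‖ ≤ 1)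
    (hB' : ∀ w, 1 ≤ w → ‖B' w‖ ≤ M / w) {W : ℝ} (hW : 1 ≤ W) :
    ‖∫ w in (1 : ℝ)..W, B w * chirp (saddleCoord r w)‖ ≤ (M + 10) / 2 := by
  set F : ℝ → ℂ := fun W ↦ ∫ w in (1 : ℝ)..W, B w * chirp (saddleCoord r w)
  set G : ℝ → ℂ := fun w ↦ B w * (saddleWeight r w * fresnelCorrector (saddleCoord r w))
  set φ : ℝ → ℝ := fun w ↦ (M + 9) * Real.arctan (saddleCoord r w) + saddleWeight r w with hφ
  have hpos : ∀ w ∈ Set.Icc 1 W, 0 < w := fun w hw ↦ one_pos.trans_le hw.1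
  have hcont : ContinuousOn (fun w ↦ B w * chirp (saddleCoord r w)) (Set.Ioi 0) := fun w hw ↦
    ((hB w hw).continuousAt.mul (continuous_chirp.continuousAt.comp
      (hasDerivAt_saddleCoord (ne_of_gt hw)).continuousAt)).continuousWithinAt
  -- Integration by parts: `B * chirp` is `-G' / 2πi` up to an error dominated by `φ'`.
  have hFG : ‖(2 * Real.pi * Complex.I * F W + G W) - (2 * Real.pi * Complex.I * F 1 + G 1)‖ ≤
      φ W - φ 1 := by
    refine norm_sub_le_sub_of_norm_deriv_le hW (fun w hw ↦ HasDerivAt.congr_deriv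
      (((hasDerivAt_intervalIntegral_of_continuousOn_Ioi hcont one_pos (hpos w hw)).const_mul
        (2 * Real.pi * Complex.I)).add (hasDerivAt_mul_saddleWeight_mul_fresnelCorrector hr
          (hpos w hw).ne' (hB w (hpos w hw)))) ?_) (fun w hw ↦
      ((hasDerivAt_saddleCoord (hpos w hw).ne').arctan.const_mul (M + 9)).add
        (hasDerivAt_saddleWeight hr (hpos w hw).ne'))
      (fun w hw ↦ norm_saddle_error_le hr (hpos w hw) (hB₁ w hw.1) (hB' w hw.1))
    ring
  have hM : 0 ≤ M := by simpa using (norm_nonneg _).trans (hB' 1 le_rfl)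
  have hφle : φ W - φ 1 ≤ (M + 9) * Real.pi + 1 := by
    have := mul_le_mul_of_nonneg_left (arctan_sub_arctan_le_pi (saddleCoord r W)
      (saddleCoord r 1)) (by linarith : 0 ≤ M + 9)
    simp only [hφ]
    linarith [saddleWeight_le_one hr W, saddleWeight_nonneg hr 1]
  have hG : ∀ w, 1 ≤ w → ‖G w‖ ≤ 1 / 2 := fun w hw ↦
    norm_mul_saddleWeight_mul_fresnelCorrector_le hr (hB₁ w hw) w
  have hF₁ : F 1 = 0 := intervalIntegral.integral_same
  have hsum : 2 * Real.pi * ‖F W‖ ≤ (M + 9) * Real.pi + 2 :=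
    calc 2 * Real.pi * ‖F W‖ = ‖2 * Real.pi * Complex.I * F W‖ := by
          simp [Real.pi_nonneg, abs_of_nonneg]
      _ = ‖((2 * Real.pi * Complex.I * F W + G W) - (2 * Real.pi * Complex.I * F 1 + G 1)) -
            G W + G 1‖ := by rw [hF₁]; congr 1; ring
      _ ≤ ((M + 9) * Real.pi + 1) + 1 / 2 + 1 / 2 := norm_add_le_of_le
          (norm_sub_le_of_le (hFG.trans hφle) (hG W hW)) (hG 1 le_rfl)
      _ = (M + 9) * Real.pi + 2 := by ring
  nlinarith [Real.pi_gt_three]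

end Oscillation

section KernelAmplitude

lemma one_sub_mul_I_mem_slitPlane (t : ℝ) : 1 - t * Complex.I ∈ Complex.slitPlane :=
  Or.inl (by simp)

lemma one_le_norm_one_sub_mul_I (t : ℝ) : 1 ≤ ‖1 - t * Complex.I‖ := by
  simpa using Complex.abs_re_le_norm (1 - t * Complex.I)

lemma abs_le_norm_one_sub_mul_I (t : ℝ) : |t| ≤ ‖1 - t * Complex.I‖ := by
  simpa using Complex.abs_im_le_norm (1 - t * Complex.I)

lemma sq_le_norm_one_sub_sq_mul_I (w : ℝ) : w ^ 2 ≤ ‖1 - w ^ 2 * Complex.I‖ := by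
  simpa using abs_le_norm_one_sub_mul_I (w ^ (2 : ℕ))

lemma norm_cpow_neg_natCast_div_two (z : ℂ) (n : ℕ) :
    ‖z ^ (-(n / 2) : ℂ)‖ = ‖z‖ ^ (-(n / 2) : ℝ) := by
  simpa using Complex.norm_cpow_real z (-(n / 2))

lemma hasDerivAt_mul_of_logDeriv {f g : ℂ → ℂ} {a b z : ℂ} (hf : HasDerivAt f (f z * a) z)
    (hg : HasDerivAt g (g z * b) z) :
    HasDerivAt (fun z ↦ f z * g z) (f z * g z * (a + b)) z :=
  (hf.mul hg).congr_deriv (by ring)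

lemma hasDerivAt_cpow_const_logDeriv {f : ℂ → ℂ} {f' z : ℂ} (c : ℂ) (hf : HasDerivAt f f' z)
    (hz : f z ∈ Complex.slitPlane) :
    HasDerivAt (fun z ↦ f z ^ c) (f z ^ c * (c * f' / f z)) z :=
  (hf.cpow_const hz).congr_deriv <| by
    rw [Complex.cpow_sub _ _ (Complex.slitPlane_ne_zero hz), Complex.cpow_one]
    ring

/-- The amplitude left in the kernel integral (`kernelIntegrand`) at times `τ = w² ≥ 1` once the
chirp in the variable `w - r/w` has been factored out. -/
def kernelAmplitude (n : ℕ) (β : ℂ) (δ r : ℝ) (w : ℂ) : ℂ :=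
  w ^ (2 * β - 1) * Complex.exp (-(δ * w ^ 2)) * (1 - w ^ 2 * Complex.I) ^ (-(n / 2) : ℂ) *
    Complex.exp (Real.pi * r ^ 2 * Complex.I / (w ^ 2 - w ^ 4 * Complex.I))

/-- The logarithmic derivative of `kernelAmplitude`. -/
def kernelAmplitudeLogDeriv (n : ℕ) (β : ℂ) (δ r : ℝ) (w : ℂ) : ℂ :=
  (2 * β - 1) / w - 2 * δ * w + n * Complex.I * w / (1 - w ^ 2 * Complex.I) -
    Real.pi * r ^ 2 * Complex.I * (2 * w - 4 * w ^ 3 * Complex.I) /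
      (w ^ 2 - w ^ 4 * Complex.I) ^ 2

variable {n : ℕ} {β : ℂ} {δ r w : ℝ}

lemma sq_sub_pow_four_mul_I (w : ℝ) :
    (w : ℂ) ^ 2 - w ^ 4 * Complex.I = (w ^ 2 : ℝ) * (1 - (w ^ 2 : ℝ) * Complex.I) := by
  push_cast
  ring

lemma sq_sub_pow_four_mul_I_ne_zero (hw : w ≠ 0) : (w : ℂ) ^ 2 - w ^ 4 * Complex.I ≠ 0 := by
  rw [sq_sub_pow_four_mul_I]
  exact mul_ne_zero (Complex.ofReal_ne_zero.2 (pow_ne_zero 2 hw))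
    (Complex.slitPlane_ne_zero (one_sub_mul_I_mem_slitPlane _))

lemma hasDerivAt_kernelAmplitude (n : ℕ) (β : ℂ) (δ r : ℝ) (hw : 0 < w) :
    HasDerivAt (kernelAmplitude n β δ r)
      (kernelAmplitude n β δ r w * kernelAmplitudeLogDeriv n β δ r w) w := by
  have hsq : HasDerivAt (fun z : ℂ ↦ z ^ 2) (2 * w) w := by simpa using hasDerivAt_pow 2 (w : ℂ)
  have hfour : HasDerivAt (fun z : ℂ ↦ z ^ 4) (4 * w ^ 3) w := by
    simpa using hasDerivAt_pow 4 (w : ℂ)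
  have hslit : 1 - (w : ℂ) ^ 2 * Complex.I ∈ Complex.slitPlane := by
    simpa using one_sub_mul_I_mem_slitPlane (w ^ (2 : ℕ))
  have hpow := hasDerivAt_cpow_const_logDeriv (2 * β - 1) (hasDerivAt_id (w : ℂ))
    (Complex.ofReal_mem_slitPlane.2 hw)
  have hdamp := (hsq.const_mul (δ : ℂ)).neg.cexp
  have hgauss := hasDerivAt_cpow_const_logDeriv (-(n / 2) : ℂ)
    ((hsq.mul_const Complex.I).const_sub 1) hslit
  have hphase := ((hasDerivAt_const (w : ℂ) (Real.pi * r ^ 2 * Complex.I)).div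
    (hsq.sub (hfour.mul_const Complex.I)) (sq_sub_pow_four_mul_I_ne_zero hw.ne')).cexp
  refine (hasDerivAt_mul_of_logDeriv (hasDerivAt_mul_of_logDeriv
    (hasDerivAt_mul_of_logDeriv hpow hdamp) hgauss) hphase).congr_deriv ?_
  simp only [kernelAmplitude, kernelAmplitudeLogDeriv, id_eq, Pi.neg_apply, Pi.sub_apply,
    Pi.div_apply]
  ring

lemma norm_exp_kernel_phase (r : ℝ) (hw : w ≠ 0) :
    ‖Complex.exp (Real.pi * r ^ 2 * Complex.I / (w ^ 2 - w ^ 4 * Complex.I))‖ =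
      Real.exp (-(Real.pi * r ^ 2 / (1 + w ^ 4))) := by
  have hne : (1 + (w : ℂ) ^ 4) ≠ 0 := by exact_mod_cast (by positivity : 1 + w ^ 4 ≠ 0)
  have heq : Real.pi * r ^ 2 * Complex.I / (w ^ 2 - w ^ 4 * Complex.I) =
      ((-(Real.pi * r ^ 2 / (1 + w ^ 4)) : ℝ) : ℂ) +
        (Real.pi * r ^ 2 / (w ^ 2 * (1 + w ^ 4)) : ℝ) * Complex.I := by
    have := sq_sub_pow_four_mul_I_ne_zero hw
    have hw' : (w : ℂ) ≠ 0 := Complex.ofReal_ne_zero.2 hw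
    push_cast
    rw [div_eq_iff this]
    field_simp
    ring_nf
    simp only [Complex.I_sq]
    ring
  rw [heq, Complex.norm_exp, Complex.add_re, Complex.ofReal_re, Complex.re_ofReal_mul, Complex.I_re,
    mul_zero, add_zero]

lemma norm_kernelAmplitude_le (hβ : 2 * β.re ≤ n + 1) (hw : 1 ≤ w) :
    ‖kernelAmplitude n β δ r w‖ ≤ Real.exp (-(δ * w ^ 2 + Real.pi * r ^ 2 / (1 + w ^ 4))) := by
  have hw₀ : 0 < w := one_pos.trans_le hw
  have hpow : ‖(w : ℂ) ^ (2 * β - 1)‖ ≤ w ^ (n : ℝ) := by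
    rw [Complex.norm_cpow_eq_rpow_re_of_pos hw₀]
    refine Real.rpow_le_rpow_of_exponent_le hw ?_
    simp only [Complex.sub_re, Complex.mul_re, Complex.re_ofNat, Complex.im_ofNat, zero_mul,
      sub_zero, Complex.one_re]
    linarith
  have hdamp : ‖Complex.exp (-(δ * w ^ 2))‖ = Real.exp (-(δ * w ^ 2)) := by
    simpa using Complex.norm_exp_ofReal (-(δ * w ^ (2 : ℕ)))
  have hgauss : ‖(1 - w ^ 2 * Complex.I) ^ (-(n / 2) : ℂ)‖ ≤ w ^ (-(n : ℝ)) := by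
    rw [norm_cpow_neg_natCast_div_two]
    refine (Real.rpow_le_rpow_of_nonpos (by positivity) (sq_le_norm_one_sub_sq_mul_I w)
      (neg_nonpos.2 (by positivity))).trans_eq ?_
    rw [← Real.rpow_natCast_mul hw₀.le]
    congr 1
    push_cast
    ring
  rw [kernelAmplitude, norm_mul, norm_mul, norm_mul, norm_exp_kernel_phase r hw₀.ne', hdamp,
    neg_add, Real.exp_add]
  refine mul_le_mul_of_nonneg_right ?_ (Real.exp_nonneg _)
  calc ‖(w : ℂ) ^ (2 * β - 1)‖ * Real.exp (-(δ * w ^ 2)) *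
        ‖(1 - w ^ 2 * Complex.I) ^ (-(n / 2) : ℂ)‖
      ≤ w ^ (n : ℝ) * Real.exp (-(δ * w ^ 2)) * w ^ (-(n : ℝ)) := by gcongr
    _ = Real.exp (-(δ * w ^ 2)) := by
        rw [mul_right_comm, ← Real.rpow_add hw₀, add_neg_cancel, Real.rpow_zero, one_mul]

lemma norm_deriv_kernel_phase_le (hw : 1 ≤ w) :
    ‖Real.pi * r ^ 2 * Complex.I * (2 * w - 4 * w ^ 3 * Complex.I) /
      (w ^ 2 - w ^ 4 * Complex.I) ^ 2‖ ≤ 6 * (Real.pi * r ^ 2 / (1 + w ^ 4)) / w := by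
  have hw₀ : 0 < w := one_pos.trans_le hw
  have hden : ‖(w : ℂ) ^ 2 - w ^ 4 * Complex.I‖ ^ 2 = w ^ 4 * (1 + w ^ 4) := by
    rw [sq_sub_pow_four_mul_I, norm_mul, mul_pow, Complex.norm_real, Real.norm_eq_abs, sq_abs,
      ← Complex.normSq_eq_norm_sq, Complex.normSq_apply]
    simp only [Complex.sub_re, Complex.sub_im, Complex.re_ofReal_mul, Complex.im_ofReal_mul,
      Complex.one_re, Complex.one_im, Complex.I_re, Complex.I_im]
    ring
  have hnum : ‖(2 * w - 4 * w ^ 3 * Complex.I : ℂ)‖ ≤ 6 * w ^ 3 := by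
    have hle : w ≤ w ^ 3 := le_self_pow₀ hw three_ne_zero
    refine (norm_sub_le _ _).trans ?_
    simp only [norm_mul, norm_pow, Complex.norm_ofNat, Complex.norm_real, Complex.norm_I,
      Real.norm_of_nonneg hw₀.le]
    linarith
  rw [norm_div, norm_mul, norm_mul, norm_mul, norm_pow, norm_pow, Complex.norm_I, hden,
    Complex.norm_real, Complex.norm_real, Real.norm_eq_abs r, sq_abs,
    Real.norm_of_nonneg Real.pi_nonneg, mul_one]
  calc Real.pi * r ^ 2 * ‖(2 * w - 4 * w ^ 3 * Complex.I : ℂ)‖ / (w ^ 4 * (1 + w ^ 4))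
      ≤ Real.pi * r ^ 2 * (6 * w ^ 3) / (w ^ 4 * (1 + w ^ 4)) := by gcongr
    _ = 6 * (Real.pi * r ^ 2 / (1 + w ^ 4)) / w := by field_simp

lemma norm_kernelAmplitudeLogDeriv_le (hδ : 0 ≤ δ) (hw : 1 ≤ w) :
    ‖kernelAmplitudeLogDeriv n β δ r w‖ ≤
      (‖2 * β - 1‖ + n + 6 * (δ * w ^ 2 + Real.pi * r ^ 2 / (1 + w ^ 4))) / w := by
  have hw₀ : 0 < w := one_pos.trans_le hw
  have hpow : ‖(2 * β - 1) / w‖ = ‖2 * β - 1‖ / w := by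
    rw [norm_div, Complex.norm_real, Real.norm_of_nonneg hw₀.le]
  have hdamp : ‖(2 * δ * w : ℂ)‖ ≤ 6 * (δ * w ^ 2) / w := by
    have : ‖(2 * δ * w : ℂ)‖ = 2 * (δ * w) := by
      simp [abs_of_nonneg hδ, abs_of_pos hw₀, mul_assoc]
    rw [this, le_div_iff₀ hw₀]
    nlinarith [mul_nonneg hδ (sq_nonneg w)]
  have hgauss : ‖n * Complex.I * w / (1 - w ^ 2 * Complex.I)‖ ≤ n / w := by
    rw [norm_div, norm_mul, norm_mul, Complex.norm_natCast, Complex.norm_I, mul_one,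
      Complex.norm_real, Real.norm_of_nonneg hw₀.le]
    calc n * w / ‖1 - w ^ 2 * Complex.I‖ ≤ n * w / w ^ 2 := by
          gcongr
          exact sq_le_norm_one_sub_sq_mul_I w
      _ = n / w := by field_simp
  calc _ ≤ ‖2 * β - 1‖ / w + 6 * (δ * w ^ 2) / w + n / w +
        6 * (Real.pi * r ^ 2 / (1 + w ^ 4)) / w := norm_sub_le_of_le
        (norm_add_le_of_le (norm_sub_le_of_le hpow.le hdamp) hgauss)
        (norm_deriv_kernel_phase_le hw)
    _ = _ := by ring

lemma norm_deriv_kernelAmplitude_le (hβ : 2 * β.re ≤ n + 1) (hδ : 0 ≤ δ) (hw : 1 ≤ w) :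
    ‖kernelAmplitude n β δ r w * kernelAmplitudeLogDeriv n β δ r w‖ ≤
      (‖2 * β - 1‖ + n + 6) / w := by
  set x := δ * w ^ 2 + Real.pi * r ^ 2 / (1 + w ^ 4)
  have hx : 0 ≤ x := by positivity
  have hexp : Real.exp (-x) ≤ 1 := Real.exp_le_one_iff.2 (neg_nonpos.2 hx)
  have hxexp : x * Real.exp (-x) ≤ 1 :=
    (Real.mul_exp_neg_le_exp_neg_one x).trans (Real.exp_le_one_iff.2 (by norm_num))
  rw [norm_mul]
  calc _ ≤ Real.exp (-x) * ((‖2 * β - 1‖ + n + 6 * x) / w) := mul_le_mul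
        (norm_kernelAmplitude_le hβ hw) (norm_kernelAmplitudeLogDeriv_le hδ hw) (norm_nonneg _)
        (Real.exp_nonneg _)
    _ = (Real.exp (-x) * (‖2 * β - 1‖ + n) + 6 * (x * Real.exp (-x))) / w := by ring
    _ ≤ (1 * (‖2 * β - 1‖ + n) + 6 * 1) / w := by gcongr
    _ = (‖2 * β - 1‖ + n + 6) / w := by ring

lemma norm_intervalIntegral_kernelAmplitude_mul_chirp_le (hβ : 2 * β.re ≤ n + 1) (hδ : 0 ≤ δ)
    (hr : 0 ≤ r) {W : ℝ} (hW : 1 ≤ W) :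
    ‖∫ w in (1 : ℝ)..W, kernelAmplitude n β δ r w * chirp (saddleCoord r w)‖ ≤
      (‖2 * β - 1‖ + n + 16) / 2 := by
  refine (norm_intervalIntegral_mul_chirp_saddleCoord_le hr
    (fun w hw ↦ (hasDerivAt_kernelAmplitude n β δ r hw).comp_ofReal) (fun w hw ↦ ?_)
    (fun w hw ↦ norm_deriv_kernelAmplitude_le hβ hδ hw) hW).trans_eq (by ring)
  exact (norm_kernelAmplitude_le hβ hw).trans (Real.exp_le_one_iff.2 (neg_nonpos.2 (by positivity)))

end KernelAmplitude

section KernelIntegral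

/-- The integrand of the superposition of Gaussians that gives the Fourier transform, at distance
`r` from the origin of an `n`-dimensional space, of `c_δ(ξ)^{-β} exp(-π|ξ|²)` with
`c_δ(ξ) = δ - iπ(|ξ|² - 1)`. -/
def kernelIntegrand (n : ℕ) (β : ℂ) (δ r τ : ℝ) : ℂ :=
  (τ : ℂ) ^ (β - 1) * Complex.exp (-((δ + Real.pi * Complex.I) * τ)) *
    (1 - τ * Complex.I) ^ (-(n / 2) : ℂ) * Complex.exp (-(Real.pi * r ^ 2 / (1 - τ * Complex.I)))

variable {n : ℕ} {β : ℂ} {δ r τ : ℝ}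

lemma norm_exp_neg_div_one_sub_mul_I_le_one (r τ : ℝ) :
    ‖Complex.exp (-(Real.pi * r ^ 2 / (1 - τ * Complex.I)))‖ ≤ 1 := by
  have hre : (-(Real.pi * r ^ 2 / (1 - τ * Complex.I))).re =
      -(Real.pi * r ^ 2 / Complex.normSq (1 - τ * Complex.I)) := by
    simp [Complex.div_re, ← Complex.ofReal_pow]
  rw [Complex.norm_exp, Real.exp_le_one_iff, hre]
  exact neg_nonpos.2 (div_nonneg (by positivity) (Complex.normSq_nonneg _))

lemma norm_kernelIntegrand_le (n : ℕ) (β : ℂ) (δ r : ℝ) (hτ : 0 < τ) :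
    ‖kernelIntegrand n β δ r τ‖ ≤ τ ^ (β.re - 1) * Real.exp (-δ * τ) := by
  have hexp : ‖Complex.exp (-((δ + Real.pi * Complex.I) * τ))‖ = Real.exp (-δ * τ) := by
    simp [Complex.norm_exp]
  have hgauss : ‖(1 - τ * Complex.I) ^ (-(n / 2) : ℂ)‖ ≤ 1 := by
    rw [norm_cpow_neg_natCast_div_two]
    exact Real.rpow_le_one_of_one_le_of_nonpos (one_le_norm_one_sub_mul_I τ)
      (neg_nonpos.2 (by positivity))
  rw [kernelIntegrand, norm_mul, norm_mul, norm_mul, Complex.norm_cpow_eq_rpow_re_of_pos hτ, hexp,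
    Complex.sub_re, Complex.one_re]
  exact (mul_le_of_le_one_right (by positivity)
    (norm_exp_neg_div_one_sub_mul_I_le_one r τ)).trans
      (mul_le_of_le_one_right (by positivity) hgauss)

lemma continuousOn_kernelIntegrand (n : ℕ) (β : ℂ) (δ r : ℝ) :
    ContinuousOn (kernelIntegrand n β δ r) (Set.Ioi 0) := by
  intro τ hτ
  have hpow := Complex.continuousAt_ofReal_cpow_const τ (β - 1) (Or.inr (ne_of_gt hτ))
  have hlin : ContinuousAt (fun τ : ℝ ↦ 1 - (τ : ℂ) * Complex.I) τ := by fun_prop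
  have hslit := one_sub_mul_I_mem_slitPlane τ
  refine ContinuousAt.continuousWithinAt ?_
  unfold kernelIntegrand
  exact ((hpow.mul (by fun_prop)).mul (hlin.cpow continuousAt_const hslit)).mul
    (continuousAt_const.div hlin (Complex.slitPlane_ne_zero hslit)).neg.cexp

lemma integrableOn_rpow_mul_exp_neg_mul {a : ℝ} (ha : 0 < a) (hδ : 0 < δ) :
    IntegrableOn (fun τ : ℝ ↦ τ ^ (a - 1) * Real.exp (-δ * τ)) (Set.Ioi 0) := by
  simpa using integrableOn_rpow_mul_exp_neg_mul_rpow (s := a - 1) (by linarith) one_pos hδ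

lemma integrableOn_kernelIntegrand (n : ℕ) (r : ℝ) (hβ : 0 < β.re) (hδ : 0 < δ) :
    IntegrableOn (kernelIntegrand n β δ r) (Set.Ioi 0) := by
  refine (integrableOn_rpow_mul_exp_neg_mul hβ hδ).mono'
    ((continuousOn_kernelIntegrand n β δ r).aestronglyMeasurable measurableSet_Ioi) ?_
  filter_upwards [ae_restrict_mem measurableSet_Ioi] with τ hτ
  exact norm_kernelIntegrand_le n β δ r hτ

lemma norm_setIntegral_Ioc_kernelIntegrand_le (n : ℕ) (r : ℝ) (hβ : 0 < β.re) (hδ : 0 ≤ δ) :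
    ‖∫ τ in Set.Ioc 0 1, kernelIntegrand n β δ r τ‖ ≤ 1 / β.re := by
  have hint : IntegrableOn (fun τ : ℝ ↦ τ ^ (β.re - 1)) (Set.Ioc 0 1) :=
    (intervalIntegrable_iff_integrableOn_Ioc_of_le zero_le_one).1
      (intervalIntegral.intervalIntegrable_rpow' (by linarith))
  calc ‖∫ τ in Set.Ioc 0 1, kernelIntegrand n β δ r τ‖
      ≤ ∫ τ in Set.Ioc 0 1, τ ^ (β.re - 1) := by
        refine norm_integral_le_of_norm_le hint ?_
        filter_upwards [ae_restrict_mem measurableSet_Ioc] with τ hτ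
        refine (norm_kernelIntegrand_le n β δ r hτ.1).trans
          (mul_le_of_le_one_right (Real.rpow_nonneg hτ.1.le _) (Real.exp_le_one_iff.2 ?_))
        nlinarith [hτ.1]
    _ = 1 / β.re := by
        rw [← intervalIntegral.integral_of_le zero_le_one, integral_rpow (Or.inl (by linarith)),
          sub_add_cancel, Real.one_rpow, Real.zero_rpow hβ.ne', sub_zero]

-- Completing the square exposes the stationary point `w = √r` of the phase:
-- `w² + r²w²/(1 + w⁴) = (w - r/w)² + 2r - r²/(w²(1 + w⁴))`.
lemma kernel_phase_eq (δ r : ℝ) {w : ℝ} (hw : w ≠ 0) :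
    -((δ + Real.pi * Complex.I) * (w : ℂ) ^ 2) +
        -(Real.pi * r ^ 2 / (1 - (w : ℂ) ^ 2 * Complex.I)) =
      -(2 * Real.pi * r) * Complex.I + (-(δ * (w : ℂ) ^ 2) +
        (Real.pi * r ^ 2 * Complex.I / (w ^ 2 - w ^ 4 * Complex.I) +
          -(Real.pi * (w - r / w) ^ 2) * Complex.I)) := by
  have hw' : (w : ℂ) ≠ 0 := Complex.ofReal_ne_zero.2 hw
  have hfactor : (w : ℂ) ^ 2 - w ^ 4 * Complex.I = w ^ 2 * (1 - w ^ 2 * Complex.I) := by ring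
  have hz : 1 - (w : ℂ) ^ 2 * Complex.I ≠ 0 := by
    simpa using Complex.slitPlane_ne_zero (one_sub_mul_I_mem_slitPlane (w ^ (2 : ℕ)))
  rw [hfactor]
  set z := 1 - (w : ℂ) ^ 2 * Complex.I with hz_def
  field_simp
  linear_combination
    (-Real.pi * r ^ 2 * Complex.I) * hz_def - Real.pi * r ^ 2 * w ^ 2 * Complex.I_sq

lemma mul_kernelIntegrand_sq (n : ℕ) (β : ℂ) (δ r : ℝ) {w : ℝ} (hw : 0 < w) :
    2 * w * kernelIntegrand n β δ r (w ^ 2) =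
      2 * Complex.exp ((-(2 * Real.pi * r) : ℝ) * Complex.I) *
        (kernelAmplitude n β δ r w * chirp (saddleCoord r w)) := by
  have harg : (w : ℂ).arg = 0 := Complex.arg_ofReal_of_nonneg hw.le
  have hpow : (w : ℂ) ^ (2 * β - 1) = w * ((w : ℂ) ^ 2) ^ (β - 1) := by
    rw [← Complex.cpow_nat_mul' (by simp [harg, Real.pi_pos]) (by simp [harg, Real.pi_pos.le]),
      show 2 * β - 1 = 1 + (2 : ℕ) * (β - 1) by push_cast; ring,
      Complex.cpow_add _ _ (Complex.ofReal_ne_zero.2 hw.ne'), Complex.cpow_one]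
  have hexp := congrArg Complex.exp (kernel_phase_eq δ r hw.ne')
  simp only [Complex.exp_add] at hexp
  rw [kernelIntegrand, kernelAmplitude, chirp, saddleCoord, hpow]
  push_cast at hexp ⊢
  linear_combination
    (2 * w * ((w : ℂ) ^ 2) ^ (β - 1) * (1 - w ^ 2 * Complex.I) ^ (-(n / 2) : ℂ)) * hexp

lemma intervalIntegral_kernelIntegrand_sq (n : ℕ) (β : ℂ) (δ r : ℝ) {W : ℝ} (hW : 1 ≤ W) :
    ∫ τ in (1 : ℝ)..W ^ 2, kernelIntegrand n β δ r τ =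
      2 * Complex.exp ((-(2 * Real.pi * r) : ℝ) * Complex.I) *
        ∫ w in (1 : ℝ)..W, kernelAmplitude n β δ r w * chirp (saddleCoord r w) := by
  have hpos : ∀ w ∈ Set.uIcc 1 W, 0 < w := fun w hw ↦
    one_pos.trans_le (Set.uIcc_of_le hW ▸ hw).1
  have hsub := intervalIntegral.integral_deriv_smul_comp'' (a := 1) (b := W)
    (f := fun w ↦ w ^ 2) (f' := fun w ↦ 2 * w) (g := kernelIntegrand n β δ r) (by fun_prop)
    (fun w _ ↦ by simpa using (hasDerivAt_pow 2 w).hasDerivWithinAt) (by fun_prop)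
    ((continuousOn_kernelIntegrand n β δ r).mono ?_)
  · rw [one_pow] at hsub
    rw [← hsub, ← intervalIntegral.integral_const_mul]
    refine intervalIntegral.integral_congr fun w hw ↦ ?_
    simpa using mul_kernelIntegrand_sq n β δ r (hpos w hw)
  · rintro _ ⟨w, hw, rfl⟩
    exact pow_pos (hpos w hw) 2

lemma norm_setIntegral_Ioi_kernelIntegrand_le (hβ : 0 < β.re) (hβn : 2 * β.re ≤ n + 1)
    (hδ : 0 < δ) (hr : 0 ≤ r) :
    ‖∫ τ in Set.Ioi 1, kernelIntegrand n β δ r τ‖ ≤ ‖2 * β - 1‖ + n + 16 := by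
  have hlim := intervalIntegral_tendsto_integral_Ioi 1
    ((integrableOn_kernelIntegrand n r hβ hδ).mono_set (Set.Ioi_subset_Ioi zero_le_one))
    (tendsto_pow_atTop two_ne_zero)
  refine le_of_tendsto hlim.norm ?_
  filter_upwards [eventually_ge_atTop 1] with W hW
  rw [intervalIntegral_kernelIntegrand_sq n β δ r hW, norm_mul, norm_mul,
    Complex.norm_exp_ofReal_mul_I, mul_one, Complex.norm_ofNat]
  linarith [norm_intervalIntegral_kernelAmplitude_mul_chirp_le hβn hδ.le hr hW]

lemma norm_integral_kernelIntegrand_le (hβ : 0 < β.re) (hβn : 2 * β.re ≤ n + 1) (hδ : 0 < δ)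
    (hr : 0 ≤ r) :
    ‖∫ τ in Set.Ioi 0, kernelIntegrand n β δ r τ‖ ≤ 1 / β.re + (‖2 * β - 1‖ + n + 16) := by
  have hint := integrableOn_kernelIntegrand n r hβ hδ
  rw [← Set.Ioc_union_Ioi_eq_Ioi zero_le_one, setIntegral_union (Set.Ioc_disjoint_Ioi le_rfl)
    measurableSet_Ioi (hint.mono_set Set.Ioc_subset_Ioi_self)
    (hint.mono_set (Set.Ioi_subset_Ioi zero_le_one))]
  exact norm_add_le_of_le (norm_setIntegral_Ioc_kernelIntegrand_le n r hβ hδ.le)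
    (norm_setIntegral_Ioi_kernelIntegrand_le hβ hβn hδ hr)

end KernelIntegral

section GammaIntegral

lemma norm_complexGamma_le {z : ℂ} (hz : 0 < z.re) : ‖Complex.Gamma z‖ ≤ Real.Gamma z.re := by
  rw [Complex.Gamma_eq_integral hz, Real.Gamma_eq_integral hz, Complex.GammaIntegral]
  refine norm_integral_le_of_norm_le (Real.GammaIntegral_convergent hz) ?_
  filter_upwards [ae_restrict_mem measurableSet_Ioi] with t ht
  simp [Complex.norm_cpow_eq_rpow_re_of_pos ht, Complex.norm_exp]

lemma continuousOn_cpow_mul_exp_neg_mul (a c : ℂ) :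
    ContinuousOn (fun t : ℝ ↦ (t : ℂ) ^ (a - 1) * Complex.exp (-(c * t))) (Set.Ioi 0) :=
  fun t ht ↦ ((Complex.continuousAt_ofReal_cpow_const t (a - 1) (Or.inr (ne_of_gt ht))).mul
    (by fun_prop)).continuousWithinAt

lemma differentiableOn_integral_cpow_mul_exp_neg_mul {a : ℂ} {ε : ℝ} (ha : 0 < a.re) (hε : 0 < ε) :
    DifferentiableOn ℂ
      (fun c ↦ ∫ t in Set.Ioi (0 : ℝ), (t : ℂ) ^ (a - 1) * Complex.exp (-(c * t)))
      {c | ε < c.re} := by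
  refine differentiableOn_integral_of_dominated (isOpen_lt continuous_const Complex.continuous_re)
    (integrableOn_rpow_mul_exp_neg_mul ha hε) (fun c _ ↦
      (continuousOn_cpow_mul_exp_neg_mul a c).aestronglyMeasurable measurableSet_Ioi) ?_
    (ae_of_all _ fun t ↦ by fun_prop)
  filter_upwards [ae_restrict_mem measurableSet_Ioi] with t ht c hc
  rw [norm_mul, Complex.norm_cpow_eq_rpow_re_of_pos ht, Complex.norm_exp, Complex.sub_re,
    Complex.one_re, Complex.neg_re, Complex.re_mul_ofReal, ← neg_mul]
  have ht₀ : 0 < t := ht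
  gcongr

-- The case of real `c` is in the library; both sides are holomorphic in `c`.
lemma integral_cpow_mul_exp_neg_mul_Ioi_of_re_pos {a c : ℂ} (ha : 0 < a.re) (hc : 0 < c.re) :
    ∫ t in Set.Ioi (0 : ℝ), (t : ℂ) ^ (a - 1) * Complex.exp (-(c * t)) =
      c ^ (-a) * Complex.Gamma a := by
  have hopen : IsOpen {z : ℂ | c.re / 2 < z.re} :=
    isOpen_lt continuous_const Complex.continuous_re
  have hpos : ∀ z ∈ {z : ℂ | c.re / 2 < z.re}, 0 < z.re := fun z hz ↦ (half_pos hc).trans hz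
  have hleft := differentiableOn_integral_cpow_mul_exp_neg_mul ha (half_pos hc)
  have hright : DifferentiableOn ℂ (fun z : ℂ ↦ z ^ (-a) * Complex.Gamma a)
      {z | c.re / 2 < z.re} := fun z hz ↦
    ((differentiableAt_id.cpow_const (Or.inl (hpos z hz))).mul_const _).differentiableWithinAt
  have hreal : ∀ r : ℝ, 0 < r →
      ∫ t in Set.Ioi (0 : ℝ), (t : ℂ) ^ (a - 1) * Complex.exp (-(r * t)) =
        (r : ℂ) ^ (-a) * Complex.Gamma a := fun r hr ↦ by
    rw [Complex.integral_cpow_mul_exp_neg_mul_Ioi ha hr, one_div, Complex.inv_cpow,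
      Complex.cpow_neg]
    rw [Complex.arg_ofReal_of_nonneg hr.le]
    exact Real.pi_ne_zero.symm
  have hne : Tendsto (fun r : ℝ ↦ (r : ℂ)) (𝓝[≠] c.re) (𝓝[≠] (c.re : ℂ)) :=
    Complex.continuous_ofReal.continuousAt.continuousWithinAt.tendsto_nhdsWithin
      fun r hr ↦ Complex.ofReal_injective.ne hr
  have hmem : (c.re : ℂ) ∈ {z : ℂ | c.re / 2 < z.re} := half_lt_self hc
  refine AnalyticOnNhd.eqOn_of_preconnected_of_frequently_eq (𝕜 := ℂ) (hleft.analyticOnNhd hopen)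
    (hright.analyticOnNhd hopen) (convex_halfSpace_re_gt _).isPreconnected
    hmem (hne.frequently (Eventually.frequently ?_))
    (half_lt_self hc)
  filter_upwards [mem_nhdsWithin_of_mem_nhds (lt_mem_nhds hc)] with r hr
  exact hreal r hr

end GammaIntegral

section SphereSymbol

variable {E : Type*} [NormedAddCommGroup E]

/-- The regularised symbol `c_δ(ξ) = δ - iπ(‖ξ‖² - 1)`, whose modulus is comparable to
`δ + |‖ξ‖ - 1|` for bounded `ξ`. -/
def sphereSymbol (δ : ℝ) (ξ : E) : ℂ := δ - Real.pi * (‖ξ‖ ^ 2 - 1) * Complex.I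

lemma sphereSymbol_re (δ : ℝ) (ξ : E) : (sphereSymbol δ ξ).re = δ := by
  simp [sphereSymbol, ← Complex.ofReal_pow]

lemma le_norm_sphereSymbol (δ : ℝ) (ξ : E) : δ ≤ ‖sphereSymbol δ ξ‖ := by
  simpa only [sphereSymbol_re] using Complex.re_le_norm (sphereSymbol δ ξ)

lemma continuous_sphereSymbol (δ : ℝ) : Continuous (sphereSymbol (E := E) δ) := by
  unfold sphereSymbol
  fun_prop

lemma norm_cexp_neg_pi_mul_norm_sq (ξ : E) :
    ‖Complex.exp (-Real.pi * ‖ξ‖ ^ 2)‖ = Real.exp (-Real.pi * ‖ξ‖ ^ 2) := by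
  simpa using Complex.norm_exp_ofReal (-Real.pi * ‖ξ‖ ^ (2 : ℕ))

variable [InnerProductSpace ℝ E] [FiniteDimensional ℝ E] [MeasurableSpace E] [BorelSpace E]

lemma fourier_integral_eq_integral_fourier {T : Type*} [MeasurableSpace T] {μ : Measure T}
    [SFinite μ] {F : E → T → ℂ} (hF : Integrable F.uncurry (volume.prod μ)) (x : E) :
    𝓕 (fun ξ ↦ ∫ t, F ξ t ∂μ) x = ∫ t, 𝓕 (F · t) x ∂μ := by
  have hchar : Continuous fun ξ : E ↦ (𝐞 (-inner ℝ ξ x) : ℂ) := by fun_prop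
  simp only [Real.fourier_eq, Circle.smul_def, ← integral_smul]
  exact integral_integral_swap (hF.bdd_mul (c := 1) hchar.aestronglyMeasurable.comp_fst
    (ae_of_all _ fun p ↦ (Circle.norm_coe _).le))

lemma fourier_const_mul (c : ℂ) (f : E → ℂ) (x : E) : 𝓕 (fun ξ ↦ c * f ξ) x = c * 𝓕 f x := by
  simp only [Real.fourier_eq, ← smul_eq_mul, smul_comm _ c, integral_smul]

lemma integrable_exp_neg_pi_mul_norm_sq :
    Integrable fun ξ : E ↦ Real.exp (-Real.pi * ‖ξ‖ ^ 2) := by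
  have hgauss := GaussianFourier.integrable_cexp_neg_mul_sq_norm_add (V := E)
    (b := (Real.pi : ℂ)) (by simpa using Real.pi_pos) 0 0
  simp only [← norm_cexp_neg_pi_mul_norm_sq]
  simpa using hgauss.norm

lemma fourier_sphereSymbol_superposition (β : ℂ) (δ τ : ℝ) (x : E) :
    𝓕 (fun ξ : E ↦ (τ : ℂ) ^ (β - 1) * Complex.exp (-(sphereSymbol δ ξ * τ)) *
        Complex.exp (-Real.pi * ‖ξ‖ ^ 2)) x =
      kernelIntegrand (Module.finrank ℝ E) β δ ‖x‖ τ := by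
  set ζ : ℂ := 1 - τ * Complex.I with hζ
  have hslit : ζ ∈ Complex.slitPlane := one_sub_mul_I_mem_slitPlane τ
  have hre : 0 < (Real.pi * ζ).re := by simp [hζ, Real.pi_pos]
  have hfactor : ∀ ξ : E, (τ : ℂ) ^ (β - 1) * Complex.exp (-(sphereSymbol δ ξ * τ)) *
      Complex.exp (-Real.pi * ‖ξ‖ ^ 2) =
        (τ : ℂ) ^ (β - 1) * Complex.exp (-((δ + Real.pi * Complex.I) * τ)) *
          Complex.exp (-(Real.pi * ζ) * ‖ξ‖ ^ 2) := fun ξ ↦ by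
    rw [mul_assoc, mul_assoc, ← Complex.exp_add, ← Complex.exp_add, sphereSymbol, hζ]
    ring_nf
  have hgauss := fourier_gaussian_innerProductSpace hre x
  have hpow : (Real.pi / (Real.pi * ζ)) ^ (Module.finrank ℝ E / 2 : ℂ) =
      ζ ^ (-(Module.finrank ℝ E / 2) : ℂ) := by
    rw [← div_div, div_self (Complex.ofReal_ne_zero.2 Real.pi_ne_zero), one_div,
      Complex.inv_cpow _ _ (Complex.slitPlane_arg_ne_pi hslit), Complex.cpow_neg]
  have hexp : -(Real.pi : ℂ) ^ 2 * ‖x‖ ^ 2 / (Real.pi * ζ) = -(Real.pi * ‖x‖ ^ 2 / ζ) := by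
    have := Complex.slitPlane_ne_zero hslit
    field_simp
  rw [hpow, hexp] at hgauss
  simp only [hfactor]
  rw [fourier_const_mul, hgauss, kernelIntegrand, mul_assoc _ _ (Complex.exp _)]

lemma integrable_sphereSymbol_superposition {β : ℂ} {δ : ℝ} (hβ : 0 < β.re) (hδ : 0 < δ) :
    Integrable (Function.uncurry fun (ξ : E) (τ : ℝ) ↦ (τ : ℂ) ^ (β - 1) *
      Complex.exp (-(sphereSymbol δ ξ * τ)) * Complex.exp (-Real.pi * ‖ξ‖ ^ 2))
      (volume.prod (volume.restrict (Set.Ioi 0))) := by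
  have hdom := (integrable_exp_neg_pi_mul_norm_sq (E := E)).mul_prod
    (integrableOn_rpow_mul_exp_neg_mul hβ hδ)
  have hpos : ∀ᵐ q ∂((volume : Measure E).prod (volume.restrict (Set.Ioi (0 : ℝ)))), 0 < q.2 :=
    Measure.quasiMeasurePreserving_snd.ae (ae_restrict_mem measurableSet_Ioi)
  refine hdom.mono' (Measurable.aestronglyMeasurable ?_) ?_
  · have := (continuous_sphereSymbol (E := E) δ).measurable
    simp only [Function.uncurry_def]
    fun_prop
  · filter_upwards [hpos] with q hq
    refine le_of_eq ?_
    rw [Function.uncurry_def, norm_mul, norm_mul, Complex.norm_cpow_eq_rpow_re_of_pos hq,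
      Complex.norm_exp, norm_cexp_neg_pi_mul_norm_sq, Complex.neg_re, Complex.re_mul_ofReal,
      sphereSymbol_re, Complex.sub_re, Complex.one_re, neg_mul δ, mul_comm]

lemma fourier_Gamma_mul_sphereSymbol_cpow {β : ℂ} {δ : ℝ} (hβ : 0 < β.re) (hδ : 0 < δ) (x : E) :
    𝓕 (fun ξ : E ↦ Complex.Gamma (β + 1) * sphereSymbol δ ξ ^ (-β) *
        Complex.exp (-Real.pi * ‖ξ‖ ^ 2)) x =
      β * ∫ τ in Set.Ioi 0, kernelIntegrand (Module.finrank ℝ E) β δ ‖x‖ τ := by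
  have hβ₀ : β ≠ 0 := fun h ↦ hβ.ne' (by rw [h, Complex.zero_re])
  have hGamma : ∀ ξ : E, Complex.Gamma (β + 1) * sphereSymbol δ ξ ^ (-β) *
      Complex.exp (-Real.pi * ‖ξ‖ ^ 2) =
        β * ∫ τ in Set.Ioi (0 : ℝ), (τ : ℂ) ^ (β - 1) * Complex.exp (-(sphereSymbol δ ξ * τ)) *
          Complex.exp (-Real.pi * ‖ξ‖ ^ 2) := fun ξ ↦ by
    rw [integral_mul_const, integral_cpow_mul_exp_neg_mul_Ioi_of_re_pos hβ
      (by rwa [sphereSymbol_re]), Complex.Gamma_add_one _ hβ₀]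
    ring
  simp only [hGamma]
  rw [fourier_const_mul, fourier_integral_eq_integral_fourier
    (integrable_sphereSymbol_superposition hβ hδ)]
  simp only [fourier_sphereSymbol_superposition]

lemma norm_fourier_Gamma_mul_sphereSymbol_cpow_le {β : ℂ} {δ : ℝ} (hβ : 0 < β.re)
    (hβn : 2 * β.re ≤ Module.finrank ℝ E + 1) (hδ : 0 < δ) (x : E) :
    ‖𝓕 (fun ξ : E ↦ Complex.Gamma (β + 1) * sphereSymbol δ ξ ^ (-β) *
        Complex.exp (-Real.pi * ‖ξ‖ ^ 2)) x‖ ≤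
      ‖β‖ * (1 / β.re + (‖2 * β - 1‖ + Module.finrank ℝ E + 16)) := by
  rw [fourier_Gamma_mul_sphereSymbol_cpow hβ hδ, norm_mul]
  gcongr
  exact norm_integral_kernelIntegrand_le hβ hβn hδ (norm_nonneg x)

end SphereSymbol

section SphereFamily

open Complex.HadamardThreeLines

lemma re_mul_norm_rpow_le_re_cpow_neg {c : ℂ} (hc : 0 < c.re) {a : ℝ} (ha₀ : 0 ≤ a) (ha₁ : a ≤ 1) :
    c.re * ‖c‖ ^ (-(1 + a)) ≤ (c ^ (-a : ℂ)).re := by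
  have hc₀ : c ≠ 0 := fun h ↦ hc.ne' (by rw [h, Complex.zero_re])
  have hnorm : 0 < ‖c‖ := norm_pos_iff.2 hc₀
  have hpolar : c.re = ‖c‖ * Real.cos |c.arg| := by
    rw [Real.cos_abs, Complex.cos_arg hc₀, mul_div_cancel₀ _ hnorm.ne']
  have hcpow : (c ^ (-a : ℂ)).re = ‖c‖ ^ (-a) * Real.cos (a * |c.arg|) := by
    rw [← Complex.ofReal_neg, Complex.cpow_ofReal_re, mul_comm c.arg, neg_mul, Real.cos_neg,
      ← Real.cos_abs, abs_mul, abs_of_nonneg ha₀]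
  have hcos : Real.cos |c.arg| ≤ Real.cos (a * |c.arg|) :=
    Real.cos_le_cos_of_nonneg_of_le_pi (by positivity) (Complex.abs_arg_le_pi c)
      (mul_le_of_le_one_left (abs_nonneg _) ha₁)
  calc c.re * ‖c‖ ^ (-(1 + a)) = ‖c‖ ^ (-a) * Real.cos |c.arg| := by
        rw [hpolar, neg_add, Real.rpow_add hnorm, Real.rpow_neg_one]
        field_simp
    _ ≤ ‖c‖ ^ (-a) * Real.cos (a * |c.arg|) := by gcongr
    _ = (c ^ (-a : ℂ)).re := hcpow.symm

lemma norm_cpow_neg_le {c : ℂ} (hc : c ≠ 0) (w : ℂ) :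
    ‖c ^ (-w)‖ ≤ ‖c‖ ^ (-w.re) * Real.exp (4 * |w.im|) := by
  have harg : |c.arg| ≤ 4 := (Complex.abs_arg_le_pi c).trans Real.pi_lt_four.le
  rw [Complex.norm_cpow_of_ne_zero hc, div_eq_mul_inv, ← Real.exp_neg, Complex.neg_re,
    Complex.neg_im, mul_neg, neg_neg]
  refine mul_le_mul_of_nonneg_left (Real.exp_le_exp.2 ?_) (Real.rpow_nonneg (norm_nonneg c) _)
  calc c.arg * w.im ≤ |c.arg| * |w.im| := (le_abs_self _).trans_eq (abs_mul _ _)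
    _ ≤ 4 * |w.im| := by gcongr

lemma norm_Gamma_mul_add_one_le {b : ℝ} (hb : 0 ≤ b) {z : ℂ} (hz : z ∈ verticalClosedStrip 0 1) :
    ‖Complex.Gamma (b * z + 1)‖ ≤ max 1 (Real.Gamma (b + 1)) := by
  have hz₀ : 0 ≤ z.re := hz.1
  have hre : (b * z + 1).re = b * z.re + 1 := by simp
  have hmem : b * z.re + 1 ∈ Set.Icc 1 (b + 1) :=
    ⟨by nlinarith, by nlinarith [show z.re ≤ 1 from hz.2]⟩
  calc ‖Complex.Gamma (b * z + 1)‖ ≤ Real.Gamma (b * z.re + 1) :=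
        hre ▸ norm_complexGamma_le (by rw [hre]; positivity)
    _ ≤ max (Real.Gamma 1) (Real.Gamma (b + 1)) :=
        Real.convexOn_Gamma.le_max_of_mem_Icc (Set.mem_Ioi.2 one_pos)
          (Set.mem_Ioi.2 (by positivity)) hmem
    _ = max 1 (Real.Gamma (b + 1)) := by rw [Real.Gamma_one]

lemma norm_exp_sq (z : ℂ) : ‖Complex.exp (z ^ 2)‖ = Real.exp (z.re ^ 2 - z.im ^ 2) := by
  rw [Complex.norm_exp, sq z, Complex.mul_re, sq, sq]

variable {E : Type*} [NormedAddCommGroup E]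

/-- The holomorphic family of multipliers concentrating on the unit sphere, used for the
frequencies near it. The factor `exp(z²)` compensates the growth of the other ones in `Im z`. -/
def sphereFamily (b δ : ℝ) (z : ℂ) (ξ : E) : ℂ :=
  Complex.exp (z ^ 2) * (Complex.Gamma (b * z + 1) * sphereSymbol δ ξ ^ (-(b * z)) *
    Complex.exp (-Real.pi * ‖ξ‖ ^ 2))

variable {b δ : ℝ} {z : ℂ}

lemma sphereSymbol_mem_slitPlane (hδ : 0 < δ) (ξ : E) : sphereSymbol δ ξ ∈ Complex.slitPlane :=
  Or.inl (by rwa [sphereSymbol_re])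

lemma continuous_sphereFamily (b : ℝ) (hδ : 0 < δ) (z : ℂ) :
    Continuous (sphereFamily (E := E) b δ z) := by
  have hpow := (continuous_sphereSymbol (E := E) δ).cpow (g := fun _ ↦ -(b * z)) continuous_const
    (sphereSymbol_mem_slitPlane hδ)
  unfold sphereFamily
  fun_prop

lemma diffContOnCl_sphereFamily (hb : 0 ≤ b) (hδ : 0 < δ) (ξ : E) :
    DiffContOnCl ℂ (sphereFamily b δ · ξ) (verticalStrip 0 1) := by
  refine DifferentiableOn.diffContOnCl fun z hz ↦ DifferentiableAt.differentiableWithinAt ?_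
  rw [closure_verticalStrip_zero_one] at hz
  have hz₀ : 0 ≤ z.re := hz.1
  have hGamma : DifferentiableAt ℂ (fun z : ℂ ↦ Complex.Gamma (b * z + 1)) z := by
    refine (Complex.differentiableAt_Gamma _ fun m hm ↦ ?_).comp z (by fun_prop)
    have hre : b * z.re + 1 = -m := by simpa using congrArg Complex.re hm
    linarith [mul_nonneg hb hz₀, (Nat.cast_nonneg m : (0 : ℝ) ≤ m)]
  have hpow : DifferentiableAt ℂ (fun z : ℂ ↦ sphereSymbol δ ξ ^ (-(b * z))) z :=
    DifferentiableAt.const_cpow (by fun_prop)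
      (Or.inl (Complex.slitPlane_ne_zero (sphereSymbol_mem_slitPlane hδ ξ)))
  unfold sphereFamily
  fun_prop

lemma norm_sphereFamily_le (hb : 0 ≤ b) (hδ : 0 < δ) (hz : z ∈ verticalClosedStrip 0 1) (ξ : E) :
    ‖sphereFamily b δ z ξ‖ ≤ Real.exp (1 + 4 * b ^ 2) * max 1 (Real.Gamma (b + 1)) *
      δ ^ (-(b * z.re)) * Real.exp (-Real.pi * ‖ξ‖ ^ 2) := by
  have hz₀ : 0 ≤ z.re := hz.1
  have hsymbol := le_norm_sphereSymbol δ ξ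
  have hpow : ‖sphereSymbol δ ξ ^ (-(b * z))‖ ≤
      δ ^ (-(b * z.re)) * Real.exp (4 * (b * |z.im|)) := by
    refine (norm_cpow_neg_le (norm_pos_iff.1 (hδ.trans_le hsymbol)) _).trans ?_
    rw [Complex.re_ofReal_mul, Complex.im_ofReal_mul, abs_mul, abs_of_nonneg hb]
    exact mul_le_mul_of_nonneg_right
      (Real.rpow_le_rpow_of_nonpos hδ hsymbol (neg_nonpos.2 (by positivity))) (Real.exp_pos _).le
  have hexp : Real.exp (z.re ^ 2 - z.im ^ 2) * Real.exp (4 * (b * |z.im|)) ≤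
      Real.exp (1 + 4 * b ^ 2) := by
    have hz₁ : z.re ≤ 1 := hz.2
    rw [← Real.exp_add, Real.exp_le_exp]
    nlinarith [sq_nonneg (|z.im| - 2 * b), sq_abs z.im]
  rw [sphereFamily, norm_mul, norm_mul, norm_mul, norm_cexp_neg_pi_mul_norm_sq, norm_exp_sq]
  calc _ ≤ Real.exp (z.re ^ 2 - z.im ^ 2) * (max 1 (Real.Gamma (b + 1)) *
        (δ ^ (-(b * z.re)) * Real.exp (4 * (b * |z.im|))) * Real.exp (-Real.pi * ‖ξ‖ ^ 2)) := by
        gcongr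
        exact norm_Gamma_mul_add_one_le hb hz
    _ = (Real.exp (z.re ^ 2 - z.im ^ 2) * Real.exp (4 * (b * |z.im|))) *
        max 1 (Real.Gamma (b + 1)) * δ ^ (-(b * z.re)) * Real.exp (-Real.pi * ‖ξ‖ ^ 2) := by ring
    _ ≤ _ := by gcongr

lemma exp_neg_pi_mul_norm_sq_le_one (ξ : E) : Real.exp (-Real.pi * ‖ξ‖ ^ 2) ≤ 1 :=
  Real.exp_le_one_iff.2 (mul_nonpos_of_nonpos_of_nonneg (neg_nonpos.2 Real.pi_pos.le) (sq_nonneg _))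

lemma norm_sphereFamily_le_mul_exp (hb : 0 ≤ b) (hδ : 0 < δ) (hz : z ∈ verticalClosedStrip 0 1)
    (ξ : E) : ‖sphereFamily b δ z ξ‖ ≤ Real.exp (1 + 4 * b ^ 2) * max 1 (Real.Gamma (b + 1)) *
      (1 + δ ^ (-b)) * Real.exp (-Real.pi * ‖ξ‖ ^ 2) := by
  have hpow := rpow_le_rpow_add_rpow (x := δ) (a := -b) (b := 0) (t := -(b * z.re)) hδ
    (neg_le_neg (mul_le_of_le_one_right hb hz.2)) (neg_nonpos.2 (mul_nonneg hb hz.1))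
  rw [Real.rpow_zero, add_comm] at hpow
  refine (norm_sphereFamily_le hb hδ hz ξ).trans ?_
  gcongr

/-- The weight `δ |c_δ|^{-1-a} exp(-π‖ξ‖²)` carried by the frequencies near the unit sphere. -/
def sphereWeight (a δ : ℝ) (ξ : E) : ℝ :=
  δ * ‖sphereSymbol δ ξ‖ ^ (-(1 + a)) * Real.exp (-Real.pi * ‖ξ‖ ^ 2)

lemma Gamma_mul_sphereWeight_le_re_sphereFamily {a θ : ℝ} (ha : 0 < a) (ha₁ : a ≤ 1) (hθ : θ ≠ 0)
    (hδ : 0 < δ) (ξ : E) :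
    Real.Gamma (a + 1) * sphereWeight a δ ξ ≤ (sphereFamily (a / θ) δ θ ξ).re := by
  have hpow := re_mul_norm_rpow_le_re_cpow_neg (c := sphereSymbol δ ξ)
    (by rwa [sphereSymbol_re]) ha.le ha₁
  rw [sphereSymbol_re] at hpow
  have hfamily : sphereFamily (a / θ) δ θ ξ =
      (Real.exp (θ ^ 2) * Real.Gamma (a + 1) * Real.exp (-Real.pi * ‖ξ‖ ^ 2) : ℝ) *
        sphereSymbol δ ξ ^ (-a : ℂ) := by
    have hb : ((a / θ : ℝ) : ℂ) * θ = a := by rw [← Complex.ofReal_mul, div_mul_cancel₀ a hθ]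
    rw [sphereFamily, hb, ← Complex.ofReal_one, ← Complex.ofReal_add, Complex.Gamma_ofReal]
    push_cast
    ring
  have : 0 ≤ Real.Gamma (a + 1) := (Real.Gamma_pos_of_pos (by linarith)).le
  rw [hfamily, Complex.re_ofReal_mul]
  calc Real.Gamma (a + 1) * sphereWeight a δ ξ
      = 1 * Real.Gamma (a + 1) * Real.exp (-Real.pi * ‖ξ‖ ^ 2) *
        (δ * ‖sphereSymbol δ ξ‖ ^ (-(1 + a))) := by
        rw [sphereWeight]
        ring
    _ ≤ _ := by
        gcongr
        exact Real.one_le_exp (sq_nonneg θ)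

variable [InnerProductSpace ℝ E] [FiniteDimensional ℝ E] [MeasurableSpace E] [BorelSpace E]

lemma norm_fourier_sphereFamily_le (hb : 0 < b) (hbn : 2 * b ≤ Module.finrank ℝ E + 1)
    (hδ : 0 < δ) (hz : z.re = 1) (x : E) :
    ‖𝓕 (sphereFamily (E := E) b δ z) x‖ ≤
      Real.exp 2 * (1 + 2 * b ^ 2 + b * (Module.finrank ℝ E + 17)) := by
  set n : ℝ := (Module.finrank ℝ E : ℝ)
  have hβ : (b * z).re = b := by rw [Complex.re_ofReal_mul, hz, mul_one]
  have hnorm : ‖b * z‖ = b * ‖z‖ := by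
    rw [norm_mul, Complex.norm_real, Real.norm_of_nonneg hb.le]
  have hz₁ : 1 ≤ ‖z‖ := hz ▸ Complex.re_le_norm z
  have hsub : ‖2 * (b * z) - 1‖ ≤ 2 * (b * ‖z‖) + 1 := (norm_sub_le _ _).trans_eq (by
    rw [norm_mul, hnorm, Complex.norm_ofNat, norm_one])
  have hexp : Real.exp (z.re ^ 2 - z.im ^ 2) = Real.exp 2 * Real.exp (-‖z‖ ^ 2) := by
    rw [← Real.exp_add, Complex.sq_norm, Complex.normSq_apply, hz]
    ring_nf
  have hdecay : Real.exp (-‖z‖ ^ 2) * ‖z‖ ^ 2 ≤ 1 := by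
    rw [Real.exp_neg, inv_mul_le_one₀ (Real.exp_pos _)]
    linarith [Real.add_one_le_exp (‖z‖ ^ 2)]
  have hkernel := norm_fourier_Gamma_mul_sphereSymbol_cpow_le (β := b * z) (hβ.symm ▸ hb)
    (hβ.symm ▸ hbn) hδ x
  rw [hnorm, hβ] at hkernel
  unfold sphereFamily
  rw [fourier_const_mul, norm_mul, norm_exp_sq, hexp]
  calc _ ≤ Real.exp 2 * Real.exp (-‖z‖ ^ 2) *
        (b * ‖z‖ * (1 / b + ((2 * (b * ‖z‖) + 1) + n + 16))) := by
        gcongr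
        exact hkernel.trans (by gcongr)
    _ = Real.exp 2 * Real.exp (-‖z‖ ^ 2) * (2 * b ^ 2 * ‖z‖ ^ 2 + (1 + b * (n + 17)) * ‖z‖) := by
        field_simp
        ring
    _ ≤ Real.exp 2 * Real.exp (-‖z‖ ^ 2) *
        (2 * b ^ 2 * ‖z‖ ^ 2 + (1 + b * (n + 17)) * ‖z‖ ^ 2) := by
        gcongr
        exact le_self_pow₀ hz₁ two_ne_zero
    _ = Real.exp 2 * (Real.exp (-‖z‖ ^ 2) * ‖z‖ ^ 2) * (1 + 2 * b ^ 2 + b * (n + 17)) := by ring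
    _ ≤ Real.exp 2 * 1 * (1 + 2 * b ^ 2 + b * (n + 17)) := by gcongr
    _ = Real.exp 2 * (1 + 2 * b ^ 2 + b * (n + 17)) := by rw [mul_one]

lemma exists_isSteinFamily_sphereFamily (hb : 0 < b) (hbn : 2 * b ≤ Module.finrank ℝ E + 1) :
    ∃ M, ∀ δ, 0 < δ → IsSteinFamily (sphereFamily (E := E) b δ) M := by
  set M₀ := Real.exp (1 + 4 * b ^ 2) * max 1 (Real.Gamma (b + 1))
  have hM₀_nonneg : 0 ≤ M₀ := by positivity
  refine ⟨max M₀ (Real.exp 2 * (1 + 2 * b ^ 2 + b * (Module.finrank ℝ E + 17))), fun δ hδ ↦ ?_⟩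
  exact {
    aestronglyMeasurable := fun z _ ↦ (continuous_sphereFamily b hδ z).aestronglyMeasurable
    diffContOnCl := diffContOnCl_sphereFamily hb.le hδ
    bounded := ⟨M₀ * (1 + δ ^ (-b)), fun z hz ξ ↦
      (norm_sphereFamily_le_mul_exp hb.le hδ hz ξ).trans
        (mul_le_of_le_one_right (by positivity) (exp_neg_pi_mul_norm_sq_le_one ξ))⟩
    norm_le := fun z hz ξ ↦ by
      have hle := norm_sphereFamily_le hb.le hδ (z := z) (by simp [verticalClosedStrip, hz]) ξ
      rw [hz, mul_zero, neg_zero, Real.rpow_zero, mul_one] at hle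
      exact (hle.trans (mul_le_of_le_one_right hM₀_nonneg (exp_neg_pi_mul_norm_sq_le_one ξ))).trans
        (le_max_left _ _)
    integrable := fun z hz ↦ (integrable_exp_neg_pi_mul_norm_sq.const_mul _).mono'
      (continuous_sphereFamily b hδ z).aestronglyMeasurable (ae_of_all _ fun ξ ↦
        norm_sphereFamily_le_mul_exp hb.le hδ (by simp [verticalClosedStrip, hz]) ξ)
    norm_fourier_le := fun z hz x ↦
      (norm_fourier_sphereFamily_le hb hbn hδ hz x).trans (le_max_right _ _) }

theorem exists_integral_sphereWeight_mul_norm_fourier_sq_le {a θ : ℝ} (hθ : 0 < θ) (hθ₁ : θ < 1)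
    (ha : 0 < a) (ha₁ : a ≤ 1) (haθ : 2 * a ≤ (Module.finrank ℝ E + 1) * θ) :
    ∃ C, ∀ δ, 0 < δ → ∀ f : SimpleFunc E ℂ, Integrable f →
      ∫ ξ, sphereWeight a δ ξ * ‖𝓕 (f : E → ℂ) ξ‖ ^ 2 ≤
        C * (∫ x, ‖f x‖ ^ (2 / (1 + θ))) ^ (1 + θ) := by
  obtain ⟨M, hM⟩ := exists_isSteinFamily_sphereFamily (E := E) (b := a / θ) (by positivity)
    (by rwa [← mul_div_assoc, div_le_iff₀ hθ])
  have hGamma : 0 < Real.Gamma (a + 1) := Real.Gamma_pos_of_pos (by linarith)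
  refine ⟨M / Real.Gamma (a + 1), fun δ hδ f hf ↦ ?_⟩
  have hstein := (hM δ hδ).integral_mul_norm_fourier_sq_le hθ hθ₁
    (w := fun ξ ↦ Real.Gamma (a + 1) * sphereWeight a δ ξ)
    (fun ξ ↦ by unfold sphereWeight; positivity)
    (fun ξ ↦ by exact_mod_cast Gamma_mul_sphereWeight_le_re_sphereFamily ha ha₁ hθ.ne' hδ ξ) hf
  simp only [mul_assoc (Real.Gamma _), integral_const_mul] at hstein
  rwa [div_mul_eq_mul_div, le_div_iff₀' hGamma]

end SphereFamily

section ShellWeight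

lemma min_one_div_two_mul_abs_sub_one_le {s r : ℝ} (hs : 0 < s) (hr : 0 ≤ r) (hr₂ : r ≤ 2) :
    min 1 s / 2 * |r - 1| ≤ |r ^ s - 1| := by
  have hmin : 0 < min 1 s := lt_min one_pos hs
  rcases le_total r 1 with h | h
  · have hpow : r ^ s ≤ 1 - min 1 s * (1 - r) := by
      have hbernoulli := rpow_one_add_le_one_add_mul_self (s := r - 1) (by linarith) hmin.le
        (min_le_left 1 s)
      rw [add_sub_cancel] at hbernoulli
      have hle := Real.rpow_le_rpow_of_exponent_ge' hr h hmin.le (min_le_right 1 s)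
      linarith
    rw [abs_of_nonpos (by linarith), abs_of_nonpos (by nlinarith)]
    nlinarith
  · have hr₀ : 0 < r := one_pos.trans_le h
    have hpow : 1 + s * Real.log r ≤ r ^ s := by
      rw [Real.rpow_def_of_pos hr₀]
      linarith [Real.add_one_le_exp (Real.log r * s)]
    have hlog : (r - 1) / 2 ≤ Real.log r := calc
      (r - 1) / 2 ≤ (r - 1) / r := div_le_div_of_nonneg_left (by linarith) hr₀ hr₂
      _ = 1 - r⁻¹ := by field_simp
      _ ≤ Real.log r := Real.one_sub_inv_le_log_of_pos hr₀
    have hmul : min 1 s * ((r - 1) / 2) ≤ s * Real.log r :=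
      mul_le_mul (min_le_right 1 s) hlog (by linarith) hs.le
    rw [abs_of_nonneg (by linarith), abs_of_nonneg (by nlinarith)]
    linarith

variable {E : Type*} [NormedAddCommGroup E]

lemma norm_sphereSymbol_sq (δ : ℝ) (ξ : E) :
    ‖sphereSymbol δ ξ‖ ^ 2 = δ ^ 2 + Real.pi ^ 2 * (‖ξ‖ ^ 2 - 1) ^ 2 := by
  have him : (sphereSymbol δ ξ).im = -(Real.pi * (‖ξ‖ ^ 2 - 1)) := by
    simp [sphereSymbol, ← Complex.ofReal_pow]
  rw [← Complex.normSq_eq_norm_sq, Complex.normSq_apply, sphereSymbol_re, him]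
  ring

/-- The density of the quadratic form `δ^a ‖u‖² + δ^(a-2) ‖(|D|^s - 1) u‖²` on the Fourier side. -/
def shellWeight (s a δ : ℝ) (ξ : E) : ℝ :=
  δ ^ a + δ ^ (a - 2) * (‖ξ‖ ^ s - 1) ^ 2

variable {s a δ : ℝ}

lemma shellWeight_eq (hδ : 0 < δ) (ξ : E) :
    shellWeight s a δ ξ = δ ^ (a - 2) * (δ ^ 2 + (‖ξ‖ ^ s - 1) ^ 2) := by
  rw [shellWeight, mul_add, ← Real.rpow_two δ, ← Real.rpow_add hδ, sub_add_cancel]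

lemma rpow_le_shellWeight (hδ : 0 < δ) (ξ : E) : δ ^ a ≤ shellWeight s a δ ξ :=
  le_add_of_nonneg_right (by positivity)

lemma shellWeight_pos (hδ : 0 < δ) (ξ : E) : 0 < shellWeight s a δ ξ :=
  (Real.rpow_pos_of_pos hδ a).trans_le (rpow_le_shellWeight hδ ξ)

lemma shellWeight_mul_norm_sq (ξ : E) (z : ℂ) :
    shellWeight s a δ ξ * ‖z‖ ^ 2 =
      δ ^ a * ‖z‖ ^ 2 + δ ^ (a - 2) * ‖((‖ξ‖ ^ s - 1 : ℝ) : ℂ) * z‖ ^ 2 := by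
  rw [norm_mul, Complex.norm_real, mul_pow, Real.norm_eq_abs, sq_abs, shellWeight]
  ring

lemma continuous_shellWeight (hs : 0 ≤ s) : Continuous (shellWeight (E := E) s a δ) := by
  have : Continuous fun ξ : E ↦ ‖ξ‖ ^ s := continuous_norm.rpow_const fun _ ↦ Or.inr hs
  unfold shellWeight
  fun_prop

lemma sphereWeight_nonneg (hδ : 0 < δ) (ξ : E) : 0 ≤ sphereWeight a δ ξ := by
  unfold sphereWeight
  positivity

lemma exists_norm_sphereSymbol_sq_le (hs : 0 < s) :
    ∃ C, 0 < C ∧ ∀ (δ : ℝ) (ξ : E), ‖ξ‖ ≤ 2 →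
      ‖sphereSymbol δ ξ‖ ^ 2 ≤ C * (δ ^ 2 + (‖ξ‖ ^ s - 1) ^ 2) := by
  set m := min 1 s / 2
  have hm : 0 < m := half_pos (lt_min one_pos hs)
  refine ⟨1 + (3 * Real.pi / m) ^ 2, by positivity, fun δ ξ hξ ↦ ?_⟩
  have hsq : m ^ 2 * (‖ξ‖ - 1) ^ 2 ≤ (‖ξ‖ ^ s - 1) ^ 2 := by
    rw [← mul_pow]
    refine sq_le_sq.2 ?_
    rw [abs_mul, abs_of_pos hm]
    exact min_one_div_two_mul_abs_sub_one_le hs (norm_nonneg ξ) hξ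
  have hfactor : (‖ξ‖ ^ 2 - 1) ^ 2 ≤ 3 ^ 2 * (‖ξ‖ - 1) ^ 2 := calc
    (‖ξ‖ ^ 2 - 1) ^ 2 = (‖ξ‖ + 1) ^ 2 * (‖ξ‖ - 1) ^ 2 := by ring
    _ ≤ 3 ^ 2 * (‖ξ‖ - 1) ^ 2 := by
      gcongr
      linarith
  calc ‖sphereSymbol δ ξ‖ ^ 2 ≤ δ ^ 2 + Real.pi ^ 2 * (3 ^ 2 * (‖ξ‖ - 1) ^ 2) := by
        rw [norm_sphereSymbol_sq]
        gcongr
    _ = δ ^ 2 + (3 * Real.pi / m) ^ 2 * (m ^ 2 * (‖ξ‖ - 1) ^ 2) := by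
        field_simp
    _ ≤ δ ^ 2 + (3 * Real.pi / m) ^ 2 * (‖ξ‖ ^ s - 1) ^ 2 := by gcongr
    _ ≤ (1 + (3 * Real.pi / m) ^ 2) * (δ ^ 2 + (‖ξ‖ ^ s - 1) ^ 2) := by
        nlinarith [sq_nonneg (3 * Real.pi / m * δ), sq_nonneg (‖ξ‖ ^ s - 1)]

lemma exists_inv_shellWeight_le_sphereWeight (hs : 0 < s) (ha : a ≤ 1) :
    ∃ C, 0 < C ∧ ∀ δ, 0 < δ → ∀ ξ : E, ‖ξ‖ ≤ 2 →
      (shellWeight s a δ ξ)⁻¹ ≤ C * sphereWeight a δ ξ := by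
  obtain ⟨C, hC, hsymbol⟩ := exists_norm_sphereSymbol_sq_le (E := E) hs
  refine ⟨C * Real.exp (4 * Real.pi), by positivity, fun δ hδ ξ hξ ↦ ?_⟩
  set c := ‖sphereSymbol δ ξ‖
  have hδc : δ ≤ c := le_norm_sphereSymbol δ ξ
  have hc : 0 < c := hδ.trans_le hδc
  have hexp : 1 ≤ Real.exp (4 * Real.pi) * Real.exp (-Real.pi * ‖ξ‖ ^ 2) := by
    rw [← Real.exp_add]
    have hξ_sq : ‖ξ‖ ^ 2 ≤ 4 := by nlinarith [norm_nonneg ξ]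
    exact Real.one_le_exp (by nlinarith [Real.pi_pos])
  have hpow : 1 ≤ δ ^ (a - 2) * c ^ 2 * (δ * c ^ (-(1 + a))) := calc
    1 ≤ (c / δ) ^ (1 - a) := Real.one_le_rpow ((one_le_div hδ).2 hδc) (by linarith)
    _ = c ^ (2 : ℝ) * c ^ (-(1 + a)) * (δ ^ (a - 2) * δ ^ (1 : ℝ)) := by
      rw [Real.div_rpow hc.le hδ.le, div_eq_mul_inv, ← Real.rpow_neg hδ.le, ← Real.rpow_add hc,
        ← Real.rpow_add hδ]
      ring_nf
    _ = _ := by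
      rw [Real.rpow_one, Real.rpow_two]
      ring
  rw [inv_le_iff_one_le_mul₀ (shellWeight_pos hδ ξ), shellWeight_eq hδ, sphereWeight]
  calc 1 ≤ (Real.exp (4 * Real.pi) * Real.exp (-Real.pi * ‖ξ‖ ^ 2)) *
        (δ ^ (a - 2) * c ^ 2 * (δ * c ^ (-(1 + a)))) := one_le_mul_of_one_le_of_one_le hexp hpow
    _ ≤ (Real.exp (4 * Real.pi) * Real.exp (-Real.pi * ‖ξ‖ ^ 2)) *
        (δ ^ (a - 2) * (C * (δ ^ 2 + (‖ξ‖ ^ s - 1) ^ 2)) * (δ * c ^ (-(1 + a)))) := by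
        gcongr
        exact hsymbol δ ξ hξ
    _ = _ := by ring

lemma exists_inv_shellWeight_le_rpow {R : ℝ} (hs : 0 < s) (ha : a ≤ 2) (hR : 0 < R) :
    ∃ C, ∀ δ, 0 < δ → δ ≤ R → ∀ ξ : E, 2 ≤ ‖ξ‖ →
      (shellWeight s a δ ξ)⁻¹ ≤ C * (1 + ‖ξ‖ ^ 2) ^ (-s) := by
  set m := 1 - (2 : ℝ) ^ (-s)
  have hm : 0 < m := sub_pos.2 (Real.rpow_lt_one_of_one_lt_of_neg one_lt_two (neg_neg_of_pos hs))
  refine ⟨(R ^ (a - 2) * m ^ 2 * 2 ^ (-s))⁻¹, fun δ hδ hδR ξ hξ ↦ ?_⟩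
  set r := ‖ξ‖
  have hr : 0 < r := two_pos.trans_le hξ
  have hbracket : 2 ^ (-s) * (r ^ (-s)) ^ 2 ≤ (1 + r ^ 2) ^ (-s) := calc
    (2 : ℝ) ^ (-s) * (r ^ (-s)) ^ 2 = (2 * r ^ 2) ^ (-s) := by
      rw [Real.mul_rpow two_pos.le (sq_nonneg r), Real.rpow_pow_comm hr.le]
    _ ≤ (1 + r ^ 2) ^ (-s) :=
      Real.rpow_le_rpow_of_nonpos (by positivity) (by nlinarith) (by linarith)
  have hdiff : m * r ^ s ≤ r ^ s - 1 := by
    have : 1 ≤ (2 : ℝ) ^ (-s) * r ^ s := by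
      rw [Real.rpow_neg two_pos.le, ← div_eq_inv_mul, ← Real.div_rpow hr.le two_pos.le]
      exact Real.one_le_rpow ((one_le_div two_pos).2 hξ) hs.le
    linarith [sub_mul 1 ((2 : ℝ) ^ (-s)) (r ^ s)]
  have hcancel : r ^ s * r ^ (-s) = 1 := by rw [← Real.rpow_add hr, add_neg_cancel, Real.rpow_zero]
  have hδR' : R ^ (a - 2) ≤ δ ^ (a - 2) := Real.rpow_le_rpow_of_nonpos hδ hδR (by linarith)
  rw [inv_le_iff_one_le_mul₀ (shellWeight_pos hδ ξ), mul_assoc, ← div_eq_inv_mul,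
    one_le_div (by positivity)]
  calc R ^ (a - 2) * m ^ 2 * 2 ^ (-s)
      = 2 ^ (-s) * (r ^ (-s)) ^ 2 * (R ^ (a - 2) * (m * r ^ s) ^ 2) := by
        linear_combination (-R ^ (a - 2) * m ^ 2 * 2 ^ (-s) * (r ^ s * r ^ (-s) + 1)) * hcancel
    _ ≤ (1 + r ^ 2) ^ (-s) * (δ ^ (a - 2) * (r ^ s - 1) ^ 2) := by gcongr
    _ ≤ (1 + r ^ 2) ^ (-s) * shellWeight s a δ ξ := by
        gcongr
        exact le_add_of_nonneg_left (by positivity)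

lemma exists_inv_shellWeight_le {R : ℝ} (hs : 0 < s) (ha : a ≤ 1) (hR : 0 < R) :
    ∃ C, 0 < C ∧ ∀ δ, 0 < δ → δ ≤ R → ∀ ξ : E,
      (shellWeight s a δ ξ)⁻¹ ≤ C * (sphereWeight a δ ξ + (1 + ‖ξ‖ ^ 2) ^ (-s)) := by
  obtain ⟨C, hC, hlow⟩ := exists_inv_shellWeight_le_sphereWeight (E := E) hs ha
  obtain ⟨C', hhigh⟩ := exists_inv_shellWeight_le_rpow (E := E) hs (ha.trans one_le_two) hR
  refine ⟨max C C', lt_max_of_lt_left hC, fun δ hδ hδR ξ ↦ ?_⟩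
  have hsphere := sphereWeight_nonneg (a := a) hδ ξ
  have hbracket : 0 ≤ (1 + ‖ξ‖ ^ 2) ^ (-s) := by positivity
  rcases le_total ‖ξ‖ 2 with hξ | hξ
  · exact (hlow δ hδ ξ hξ).trans (mul_le_mul (le_max_left _ _)
      (le_add_of_nonneg_right hbracket) hsphere (hC.le.trans (le_max_left _ _)))
  · exact (hhigh δ hδ hδR ξ hξ).trans (mul_le_mul (le_max_right _ _)
      (le_add_of_nonneg_left hsphere) hbracket (hC.le.trans (le_max_left _ _)))

variable [InnerProductSpace ℝ E] [FiniteDimensional ℝ E] [MeasurableSpace E] [BorelSpace E]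

lemma integrable_sphereWeight_mul (ha : 0 < a) (hδ : 0 < δ) {g : E → ℝ} (hg : Integrable g) :
    Integrable fun ξ ↦ sphereWeight a δ ξ * g ξ := by
  have hcont : Continuous fun ξ : E ↦ sphereWeight a δ ξ := by
    have : Continuous fun ξ : E ↦ ‖sphereSymbol δ ξ‖ ^ (-(1 + a)) :=
      (continuous_sphereSymbol δ).norm.rpow_const fun ξ ↦
        Or.inl (hδ.trans_le (le_norm_sphereSymbol δ ξ)).ne'
    unfold sphereWeight
    fun_prop
  refine hg.bdd_mul (c := δ * δ ^ (-(1 + a))) hcont.aestronglyMeasurable (ae_of_all _ fun ξ ↦ ?_)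
  rw [Real.norm_of_nonneg (sphereWeight_nonneg hδ ξ)]
  refine (mul_le_of_le_one_right (by positivity) (exp_neg_pi_mul_norm_sq_le_one ξ)).trans ?_
  exact mul_le_mul_of_nonneg_left
    (Real.rpow_le_rpow_of_nonpos hδ (le_norm_sphereSymbol δ ξ) (by linarith)) hδ.le

lemma integrable_one_add_norm_sq_rpow_neg_mul (hs : 0 ≤ s) {g : E → ℝ} (hg : Integrable g) :
    Integrable fun ξ ↦ (1 + ‖ξ‖ ^ 2) ^ (-s) * g ξ := by
  have hcont : Continuous fun ξ : E ↦ (1 + ‖ξ‖ ^ 2) ^ (-s) :=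
    Continuous.rpow_const (by fun_prop) fun ξ ↦ Or.inl (by positivity)
  refine hg.bdd_mul (c := 1) hcont.aestronglyMeasurable (ae_of_all _ fun ξ ↦ ?_)
  rw [Real.norm_of_nonneg (by positivity)]
  exact Real.rpow_le_one_of_one_le_of_nonpos (le_add_of_nonneg_right (sq_nonneg _)) (by linarith)

theorem exists_integral_inv_shellWeight_mul_norm_fourier_sq_le {θ R : ℝ} (hθ : 0 < θ)
    (hθ₁ : θ < 1) (hs : Module.finrank ℝ E * θ < 2 * s) (ha : 0 < a) (ha₁ : a ≤ 1)
    (haθ : 2 * a ≤ (Module.finrank ℝ E + 1) * θ) (hR : 0 < R) :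
    ∃ C, 0 ≤ C ∧ ∀ δ, 0 < δ → δ ≤ R → ∀ f : SimpleFunc E ℂ, Integrable f →
      ∫ ξ, (shellWeight s a δ ξ)⁻¹ * ‖𝓕 (f : E → ℂ) ξ‖ ^ 2 ≤
        C * (∫ x, ‖f x‖ ^ (2 / (1 + θ))) ^ (1 + θ) := by
  have hs₀ : 0 < s := by nlinarith [(Module.finrank ℝ E).cast_nonneg (α := ℝ)]
  obtain ⟨A, hA, hweight⟩ := exists_inv_shellWeight_le (E := E) hs₀ ha₁ hR
  obtain ⟨B, hB⟩ := exists_integral_sphereWeight_mul_norm_fourier_sq_le (E := E) hθ hθ₁ ha ha₁ haθ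
  set B' := max 1 (∫ ξ : E, (1 + ‖ξ‖ ^ 2) ^ (-(s / θ)))
  refine ⟨A * (max B 0 + B'), by positivity, fun δ hδ hδR f hf ↦ ?_⟩
  have hF : Integrable fun ξ ↦ ‖𝓕 (f : E → ℂ) ξ‖ ^ 2 :=
    (memLp_two_fourier hf ((SimpleFunc.memLp_iff_integrable two_ne_zero ENNReal.ofNat_ne_top).2
      hf)).integrable_norm_pow two_ne_zero
  have hlow := integrable_sphereWeight_mul ha hδ hF
  have hhigh := integrable_one_add_norm_sq_rpow_neg_mul hs₀.le hF
  set X := (∫ x, ‖f x‖ ^ (2 / (1 + θ))) ^ (1 + θ)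
  have hX : 0 ≤ X := by positivity
  calc ∫ ξ, (shellWeight s a δ ξ)⁻¹ * ‖𝓕 (f : E → ℂ) ξ‖ ^ 2
      ≤ ∫ ξ, A * (sphereWeight a δ ξ * ‖𝓕 (f : E → ℂ) ξ‖ ^ 2 +
          (1 + ‖ξ‖ ^ 2) ^ (-s) * ‖𝓕 (f : E → ℂ) ξ‖ ^ 2) := by
        refine integral_mono_of_nonneg (ae_of_all _ fun ξ ↦ ?_) ((hlow.add hhigh).const_mul A)
          (ae_of_all _ fun ξ ↦ ?_)
        · exact mul_nonneg (inv_nonneg.2 (shellWeight_pos hδ ξ).le) (sq_nonneg _)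
        · simp only [← add_mul, ← mul_assoc]
          exact mul_le_mul_of_nonneg_right (hweight δ hδ hδR ξ) (sq_nonneg _)
    _ = A * ((∫ ξ, sphereWeight a δ ξ * ‖𝓕 (f : E → ℂ) ξ‖ ^ 2) +
          ∫ ξ, (1 + ‖ξ‖ ^ 2) ^ (-s) * ‖𝓕 (f : E → ℂ) ξ‖ ^ 2) := by
        rw [integral_const_mul, integral_add hlow hhigh]
    _ ≤ A * (max B 0 * X + B' * X) := by
        gcongr
        · exact (hB δ hδ f hf).trans (mul_le_mul_of_nonneg_right (le_max_left B 0) hX)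
        · exact integral_rpow_mul_norm_fourier_sq_le hθ hθ₁ hs hf
    _ = A * (max B 0 + B') * X := by ring

end ShellWeight

section Duality

variable {H : Type*} [NormedAddCommGroup H] [InnerProductSpace ℂ H]

lemma half_norm_sq_le_re_inner {x y : H} (h : ‖x - y‖ ≤ ‖x‖ / 2) :
    ‖x‖ ^ 2 / 2 ≤ (inner ℂ x y).re := by
  have hsplit : (inner ℂ x y).re = ‖x‖ ^ 2 - (inner ℂ x (x - y)).re := by
    rw [inner_sub_right, Complex.sub_re, ← inner_self_eq_norm_sq (𝕜 := ℂ) x, RCLike.re_to_complex]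
    ring
  have hcauchy : (inner ℂ x (x - y)).re ≤ ‖x‖ * (‖x‖ / 2) :=
    (re_inner_le_norm (𝕜 := ℂ) x (x - y)).trans (mul_le_mul_of_nonneg_left h (norm_nonneg x))
  rw [hsplit]
  linarith

variable {α : Type*} [MeasurableSpace α] {μ : Measure α} {v : α → H}

lemma exists_simpleFunc_tendsto_half_norm_sq_le_re_inner {r : ℝ≥0∞} (hr : r ≠ 0) (hr' : r ≠ ∞)
    (hv : StronglyMeasurable v) (hvr : MemLp v r μ) :
    ∃ t : ℕ → SimpleFunc α H, (∀ n, Integrable (t n) μ) ∧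
      (∀ n x, ‖t n x‖ ^ 2 / 2 ≤ (inner ℂ (t n x) (v x)).re) ∧
      ∀ x, Tendsto (t · x) atTop (𝓝 (v x)) := by
  obtain ⟨t, hsupport, ht⟩ := hvr.finStronglyMeasurable_of_stronglyMeasurable hv hr hr'
  set A : ℕ → Set α := fun n ↦ {x | ‖t n x - v x‖ ≤ ‖t n x‖ / 2}
  have hA : ∀ n, MeasurableSet (A n) := fun n ↦
    measurableSet_le ((t n).stronglyMeasurable.sub hv).norm.measurable
      ((t n).stronglyMeasurable.norm.measurable.div_const 2)
  refine ⟨fun n ↦ (t n).restrict (A n), fun n ↦ ?_, fun n x ↦ ?_, fun x ↦ ?_⟩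
  · rw [SimpleFunc.coe_restrict _ (hA n)]
    exact (SimpleFunc.integrable_iff_finMeasSupp.2 (hsupport n)).indicator (hA n)
  · by_cases hx : x ∈ A n
    · simpa only [SimpleFunc.restrict_apply _ (hA n), Set.indicator_of_mem hx] using
        half_norm_sq_le_re_inner hx
    · simp [SimpleFunc.restrict_apply _ (hA n), Set.indicator_of_notMem hx]
  · simp only [SimpleFunc.restrict_apply _ (hA _)]
    rcases eq_or_ne (v x) 0 with hvx | hvx
    · have hnorm : Tendsto (fun n ↦ ‖t n x‖) atTop (𝓝 0) := by simpa [hvx] using (ht x).norm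
      rw [hvx]
      exact squeeze_zero_norm (fun n ↦ norm_indicator_le_norm_self _ x) hnorm
    · have hnear : ∀ᶠ n in atTop, x ∈ A n :=
        (((ht x).sub_const (v x)).norm.eventually_lt ((ht x).norm.div_const 2) (by simpa)).mono
          fun _ hn ↦ hn.le
      exact (ht x).congr' (hnear.mono fun n hn ↦ (Set.indicator_of_mem hn (t n)).symm)

lemma half_integral_norm_rpow_le_re_integral_inner {p : ℝ} (hp : 2 ≤ p) {t : SimpleFunc α H}
    (ht : Integrable t μ) (hv : MemLp v 2 μ)
    (htv : ∀ x, ‖t x‖ ^ 2 / 2 ≤ (inner ℂ (t x) (v x)).re) :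
    (∫ x, ‖t x‖ ^ p ∂μ) / 2 ≤
      (∫ x, inner ℂ (((‖t x‖ ^ (p - 2) : ℝ) : ℂ) • t x) (v x) ∂μ).re := by
  have hg : MemLp (fun x ↦ ((‖t x‖ ^ (p - 2) : ℝ) : ℂ) • t x) 2 μ :=
    memLp_simpleFunc_comp ht (T := fun y ↦ ((‖y‖ ^ (p - 2) : ℝ) : ℂ) • y) (smul_zero _)
      two_ne_zero ENNReal.ofNat_ne_top
  have hinner : Integrable (fun x ↦ inner ℂ (((‖t x‖ ^ (p - 2) : ℝ) : ℂ) • t x) (v x)) μ :=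
    (hg.norm.integrable_mul hv.norm).mono' (hg.1.inner hv.1)
      (ae_of_all _ fun x ↦ norm_inner_le_norm _ _)
  rw [← RCLike.re_to_complex, ← integral_re hinner, ← integral_div]
  refine integral_mono ((integrable_simpleFunc_comp ht (T := (‖·‖ ^ p)) ?_).div_const 2)
    hinner.re fun x ↦ ?_
  · simp only [norm_zero, Real.zero_rpow (by linarith : p ≠ 0)]
  · have hpow : ‖t x‖ ^ p = ‖t x‖ ^ (p - 2) * ‖t x‖ ^ 2 := by
      rw [← Real.rpow_two, ← Real.rpow_add' (norm_nonneg _) (by linarith), sub_add_cancel]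
    simp only [inner_smul_left, Complex.conj_ofReal, RCLike.re_to_complex, Complex.re_ofReal_mul]
    rw [hpow, mul_div_assoc]
    exact mul_le_mul_of_nonneg_left (htv x) (Real.rpow_nonneg (norm_nonneg _) _)

lemma integral_norm_rpow_le_of_half_norm_sq_le {p q K : ℝ} (hp : 2 ≤ p) (hpq : p.HolderConjugate q)
    (hK₀ : 0 ≤ K) {t : SimpleFunc α H} (ht : Integrable t μ) (hv : MemLp v 2 μ)
    (htv : ∀ x, ‖t x‖ ^ 2 / 2 ≤ (inner ℂ (t x) (v x)).re)
    (hK : ∀ g : SimpleFunc α H, Integrable g μ →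
      ‖∫ x, inner ℂ (g x) (v x) ∂μ‖ ≤ K * (∫ x, ‖g x‖ ^ q ∂μ) ^ (1 / q)) :
    (∫ x, ‖t x‖ ^ p ∂μ) ^ (1 / p) ≤ 2 * K := by
  set I := ∫ x, ‖t x‖ ^ p ∂μ
  have hI : 0 ≤ I := by positivity
  set T : H → H := fun y ↦ ((‖y‖ ^ (p - 2) : ℝ) : ℂ) • y
  have hnorm : ∀ y : H, ‖T y‖ ^ q = ‖y‖ ^ p := fun y ↦ by
    rw [norm_smul, Complex.norm_real, Real.norm_of_nonneg (by positivity)]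
    nth_rw 2 [← Real.rpow_one ‖y‖]
    rw [← Real.rpow_add' (norm_nonneg y) (by linarith), ← Real.rpow_mul (norm_nonneg y),
      show (p - 2 + 1) * q = p by linarith [hpq.sub_one_mul_conj]]
  have hle : I / 2 ≤ K * I ^ (1 / q) := calc
    I / 2 ≤ (∫ x, inner ℂ (T (t x)) (v x) ∂μ).re :=
      half_integral_norm_rpow_le_re_integral_inner hp ht hv htv
    _ ≤ ‖∫ x, inner ℂ (T (t x)) (v x) ∂μ‖ := Complex.re_le_norm _
    _ ≤ K * (∫ x, ‖T (t x)‖ ^ q ∂μ) ^ (1 / q) :=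
      hK (t.map T) (integrable_simpleFunc_comp ht (T := T) (smul_zero _))
    _ = K * I ^ (1 / q) := by simp only [hnorm, I]
  rcases hI.eq_or_lt with hI₀ | hI₀
  · rw [← hI₀, Real.zero_rpow (one_div_pos.2 hpq.pos).ne']
    positivity
  · have hsplit : I = I ^ (1 / p) * I ^ (1 / q) := by
      rw [← Real.rpow_add hI₀, one_div, one_div, hpq.inv_add_inv_eq_one, Real.rpow_one]
    refine le_of_mul_le_mul_right ?_ (Real.rpow_pos_of_pos hI₀ (1 / q))
    linarith

theorem eLpNorm_le_of_forall_simpleFunc_norm_integral_inner_le {p q K : ℝ} (hp : 2 ≤ p)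
    (hpq : p.HolderConjugate q) (hK₀ : 0 ≤ K) (hv : MemLp v 2 μ)
    (hK : ∀ g : SimpleFunc α H, Integrable g μ →
      ‖∫ x, inner ℂ (g x) (v x) ∂μ‖ ≤ K * (∫ x, ‖g x‖ ^ q ∂μ) ^ (1 / q)) :
    eLpNorm v (ENNReal.ofReal p) μ ≤ ENNReal.ofReal (2 * K) := by
  have hp₀ : ENNReal.ofReal p ≠ 0 := (ENNReal.ofReal_pos.2 hpq.pos).ne'
  have hmk := hv.1.ae_eq_mk
  set w := hv.1.mk v
  have hw : MemLp w 2 μ := hv.ae_eq hmk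
  obtain ⟨t, ht, htw, hlim⟩ := exists_simpleFunc_tendsto_half_norm_sq_le_re_inner two_ne_zero
    ENNReal.ofNat_ne_top hv.1.stronglyMeasurable_mk hw
  have hKw : ∀ g : SimpleFunc α H, Integrable g μ →
      ‖∫ x, inner ℂ (g x) (w x) ∂μ‖ ≤ K * (∫ x, ‖g x‖ ^ q ∂μ) ^ (1 / q) := fun g hg ↦ by
    rw [← integral_congr_ae (hmk.mono fun x hx ↦ congrArg (inner ℂ (g x)) hx)]
    exact hK g hg
  have hbound : ∀ n, eLpNorm (t n) (ENNReal.ofReal p) μ ≤ ENNReal.ofReal (2 * K) := fun n ↦ by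
    rw [((SimpleFunc.memLp_iff_integrable hp₀ ENNReal.ofReal_ne_top).2
      (ht n)).eLpNorm_eq_integral_rpow_norm hp₀ ENNReal.ofReal_ne_top,
      ENNReal.toReal_ofReal hpq.nonneg, ← one_div]
    exact ENNReal.ofReal_le_ofReal
      (integral_norm_rpow_le_of_half_norm_sq_le hp hpq hK₀ (ht n) hw (htw n) hKw)
  rw [eLpNorm_congr_ae hmk]
  exact (Lp.eLpNorm_lim_le_liminf_eLpNorm (fun n ↦ (t n).aestronglyMeasurable) w
    (ae_of_all _ hlim)).trans (liminf_le_of_le (by isBoundedDefault) fun b hb ↦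
      hb.exists.elim fun n hn ↦ hn.trans (hbound n))

end Duality

section WeightedPairing

lemma integral_norm_sq_eq_toReal_eLpNorm_sq {α F : Type*} [MeasurableSpace α]
    [NormedAddCommGroup F] {μ : Measure α} {f : α → F} (hf : MemLp f 2 μ) :
    ∫ x, ‖f x‖ ^ 2 ∂μ = (eLpNorm f 2 μ).toReal ^ 2 := by
  rw [eLpNorm_two_eq_ofReal_sqrt hf, ENNReal.toReal_ofReal (Real.sqrt_nonneg _),
    Real.sq_sqrt (by positivity)]

lemma norm_integral_inner_le_sqrt_mul_sqrt {α H : Type*} [MeasurableSpace α]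
    [NormedAddCommGroup H] [InnerProductSpace ℂ H] {μ : Measure α} {f g : α → H} {V : α → ℝ}
    (hV : ∀ x, 0 < V x) (hVm : AEMeasurable V μ) (hf : AEStronglyMeasurable f μ)
    (hg : AEStronglyMeasurable g μ) (hVf : Integrable (fun x ↦ V x * ‖f x‖ ^ 2) μ)
    (hVg : Integrable (fun x ↦ (V x)⁻¹ * ‖g x‖ ^ 2) μ) :
    ‖∫ x, inner ℂ (g x) (f x) ∂μ‖ ≤
      √(∫ x, V x * ‖f x‖ ^ 2 ∂μ) * √(∫ x, (V x)⁻¹ * ‖g x‖ ^ 2 ∂μ) := by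
  have hsq : ∀ x, (√(V x) * ‖f x‖) ^ 2 = V x * ‖f x‖ ^ 2 := fun x ↦ by
    rw [mul_pow, Real.sq_sqrt (hV x).le]
  have hsq' : ∀ x, (√(V x)⁻¹ * ‖g x‖) ^ 2 = (V x)⁻¹ * ‖g x‖ ^ 2 := fun x ↦ by
    rw [mul_pow, Real.sq_sqrt (inv_pos.2 (hV x)).le]
  have hFm : AEStronglyMeasurable (fun x ↦ √(V x) * ‖f x‖) μ :=
    (hVm.sqrt.mul hf.norm.aemeasurable).aestronglyMeasurable
  have hGm : AEStronglyMeasurable (fun x ↦ √(V x)⁻¹ * ‖g x‖) μ :=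
    (hVm.inv.sqrt.mul hg.norm.aemeasurable).aestronglyMeasurable
  have hF : MemLp (fun x ↦ √(V x) * ‖f x‖) 2 μ :=
    (memLp_two_iff_integrable_sq hFm).2 (by simpa only [hsq] using hVf)
  have hG : MemLp (fun x ↦ √(V x)⁻¹ * ‖g x‖) 2 μ :=
    (memLp_two_iff_integrable_sq hGm).2 (by simpa only [hsq'] using hVg)
  have hinner : ∀ x, ‖inner ℂ (g x) (f x)‖ ≤ (√(V x) * ‖f x‖) * (√(V x)⁻¹ * ‖g x‖) := fun x ↦ by
    rw [mul_mul_mul_comm, ← Real.sqrt_mul (hV x).le, mul_inv_cancel₀ (hV x).ne', Real.sqrt_one,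
      one_mul, mul_comm]
    exact norm_inner_le_norm _ _
  have hholder := integral_mul_le_Lp_mul_Lq_of_nonneg (f := fun x ↦ √(V x) * ‖f x‖)
    (g := fun x ↦ √(V x)⁻¹ * ‖g x‖) Real.HolderConjugate.two_two
    (ae_of_all μ fun x ↦ by positivity) (ae_of_all μ fun x ↦ by positivity)
    (by rwa [ENNReal.ofReal_ofNat]) (by rwa [ENNReal.ofReal_ofNat])
  simp only [Real.rpow_two, hsq, hsq', ← Real.sqrt_eq_rpow] at hholder
  exact (norm_integral_le_of_norm_le (hF.integrable_mul hG) (ae_of_all _ hinner)).trans hholder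

lemma div_rpow_mul_sq {ν d κ : ℝ} (hν : 0 < ν) (hd : 0 < d) :
    (d / ν) ^ (2 * (1 - κ)) * ν ^ 2 = (ν ^ κ * d ^ (1 - κ)) ^ 2 := by
  have hsplit : ν = ν ^ κ * ν ^ (1 - κ) := by
    rw [← Real.rpow_add hν, add_sub_cancel, Real.rpow_one]
  have hpow : ν ^ (1 - κ) ≠ 0 := (Real.rpow_pos_of_pos hν _).ne'
  nth_rw 2 [hsplit]
  rw [mul_comm 2, Real.rpow_mul (by positivity), Real.rpow_two, Real.div_rpow hd.le hν.le]
  field_simp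

variable {E : Type*} [NormedAddCommGroup E] [InnerProductSpace ℝ E] [FiniteDimensional ℝ E]
  [MeasurableSpace E] [BorelSpace E] {s a δ : ℝ}

lemma integrable_inv_shellWeight_mul (hs : 0 ≤ s) (hδ : 0 < δ) {g : E → ℝ} (hg : Integrable g) :
    Integrable fun ξ ↦ (shellWeight s a δ ξ)⁻¹ * g ξ := by
  have hcont : Continuous fun ξ : E ↦ (shellWeight s a δ ξ)⁻¹ :=
    (continuous_shellWeight hs).inv₀ fun ξ ↦ (shellWeight_pos hδ ξ).ne'
  refine hg.bdd_mul (c := (δ ^ a)⁻¹) hcont.aestronglyMeasurable (ae_of_all _ fun ξ ↦ ?_)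
  rw [Real.norm_of_nonneg (inv_nonneg.2 (shellWeight_pos hδ ξ).le)]
  exact inv_anti₀ (by positivity) (rpow_le_shellWeight hδ ξ)

lemma norm_integral_inner_le_of_integral_inv_shellWeight_le {u v g : E → ℂ} {κ ν d B : ℝ}
    (hs : 0 ≤ s) (hν : 0 < ν) (hd : 0 < d) (hu : MemLp u 2) (hv : MemLp v 2)
    (huv : 𝓕 (hu.toLp u) = hv.toLp v)
    (hsv : MemLp (fun ξ ↦ ((‖ξ‖ ^ s - 1 : ℝ) : ℂ) * v ξ) 2)
    (hv_sq : ∫ ξ, ‖v ξ‖ ^ 2 = ν ^ 2)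
    (hsv_sq : ∫ ξ, ‖((‖ξ‖ ^ s - 1 : ℝ) : ℂ) * v ξ‖ ^ 2 = d ^ 2)
    (hg : Integrable g) (hg₂ : MemLp g 2)
    (hB : ∫ ξ, (shellWeight s (2 * (1 - κ)) (d / ν) ξ)⁻¹ * ‖𝓕 g ξ‖ ^ 2 ≤ B) :
    ‖∫ x, inner ℂ (g x) (u x)‖ ≤ √2 * (ν ^ κ * d ^ (1 - κ)) * √B := by
  have hδ : 0 < d / ν := div_pos hd hν
  have hF := memLp_two_fourier hg hg₂
  have hv' := (hv.integrable_norm_pow two_ne_zero).const_mul ((d / ν) ^ (2 * (1 - κ)))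
  have hsv' := (hsv.integrable_norm_pow two_ne_zero).const_mul ((d / ν) ^ (2 * (1 - κ) - 2))
  have hVv : Integrable fun ξ ↦ shellWeight s (2 * (1 - κ)) (d / ν) ξ * ‖v ξ‖ ^ 2 := by
    simp only [shellWeight_mul_norm_sq]
    exact hv'.add hsv'
  have hVv_eq : ∫ ξ, shellWeight s (2 * (1 - κ)) (d / ν) ξ * ‖v ξ‖ ^ 2 =
      2 * (ν ^ κ * d ^ (1 - κ)) ^ 2 := by
    simp only [shellWeight_mul_norm_sq]
    rw [integral_add hv' hsv', integral_const_mul, integral_const_mul, hv_sq, hsv_sq,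
      Real.rpow_sub hδ, Real.rpow_two, ← div_rpow_mul_sq hν hd]
    field_simp
    ring
  rw [← integral_inner_fourier_of_fourier_toLp hu hv huv hg hg₂]
  calc ‖∫ ξ, inner ℂ (𝓕 g ξ) (v ξ)‖
      ≤ √(∫ ξ, shellWeight s (2 * (1 - κ)) (d / ν) ξ * ‖v ξ‖ ^ 2) *
          √(∫ ξ, (shellWeight s (2 * (1 - κ)) (d / ν) ξ)⁻¹ * ‖𝓕 g ξ‖ ^ 2) :=
        norm_integral_inner_le_sqrt_mul_sqrt (shellWeight_pos hδ)
          (continuous_shellWeight hs).measurable.aemeasurable hv.1 hF.1 hVv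
          (integrable_inv_shellWeight_mul hs hδ (hF.integrable_norm_pow two_ne_zero))
    _ ≤ √2 * (ν ^ κ * d ^ (1 - κ)) * √B := by
        rw [hVv_eq, Real.sqrt_mul zero_le_two, Real.sqrt_sq (by positivity)]
        gcongr

theorem exists_eLpNorm_le_of_fourier_toLp {p κ R : ℝ} (hp : 2 < p) (hκ : 1 / 2 ≤ κ) (hκ₁ : κ < 1)
    (hs : Module.finrank ℝ E * (1 / 2 - 1 / p) < s)
    (hκp : 1 - κ ≤ (Module.finrank ℝ E + 1) / 2 * (1 / 2 - 1 / p)) (hR : 0 < R) :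
    ∃ M, 0 ≤ M ∧ ∀ (u v : E → ℂ) (hu : MemLp u 2) (hv : MemLp v 2),
      𝓕 (hu.toLp u) = hv.toLp v → MemLp (fun ξ ↦ ((‖ξ‖ ^ s - 1 : ℝ) : ℂ) * v ξ) 2 →
      ∀ ν d, 0 < ν → 0 < d → d ≤ R * ν → ∫ ξ, ‖v ξ‖ ^ 2 = ν ^ 2 →
      ∫ ξ, ‖((‖ξ‖ ^ s - 1 : ℝ) : ℂ) * v ξ‖ ^ 2 = d ^ 2 →
      eLpNorm u (ENNReal.ofReal p) volume ≤ ENNReal.ofReal (M * (ν ^ κ * d ^ (1 - κ))) := by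
  have hpq := Real.HolderConjugate.conjExponent (one_lt_two.trans hp)
  set q := p.conjExponent
  have hp_inv : 0 < 1 / p ∧ 1 / p < 1 / 2 :=
    ⟨by positivity, one_div_lt_one_div_of_lt two_pos hp⟩
  set θ := 2 * (1 / 2 - 1 / p) with hθ
  have hθq : 1 + θ = 2 / q := by
    rw [hθ, div_eq_mul_inv 2 q, ← hpq.one_sub_inv]
    ring
  have hs₀ : 0 ≤ s := by
    nlinarith [(Module.finrank ℝ E).cast_nonneg (α := ℝ)]
  obtain ⟨C, hC, hbound⟩ := exists_integral_inv_shellWeight_mul_norm_fourier_sq_le (E := E)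
    (s := s) (a := 2 * (1 - κ)) (θ := θ) (by linarith) (by linarith)
    (by linear_combination 2 * hs) (by linarith) (by linarith) (by linear_combination 4 * hκp) hR
  refine ⟨2 * (√2 * √C), by positivity, fun u v hu hv huv hsv ν d hν hd hdR hv_sq hsv_sq ↦ ?_⟩
  have hpair : ∀ g : SimpleFunc E ℂ, Integrable g →
      ‖∫ x, inner ℂ (g x) (u x)‖ ≤
        √2 * √C * (ν ^ κ * d ^ (1 - κ)) * (∫ x, ‖g x‖ ^ q) ^ (1 / q) := fun g hg ↦ by
    have hle := hbound (d / ν) (by positivity) ((div_le_iff₀ hν).2 hdR) g hg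
    rw [hθq, div_div_cancel₀ two_ne_zero] at hle
    refine (norm_integral_inner_le_of_integral_inv_shellWeight_le hs₀ hν hd hu hv huv hsv hv_sq
      hsv_sq hg ((SimpleFunc.memLp_iff_integrable two_ne_zero ENNReal.ofNat_ne_top).2 hg)
      hle).trans_eq ?_
    rw [Real.sqrt_mul hC, Real.sqrt_eq_rpow ((∫ x, ‖g x‖ ^ q) ^ (2 / q)),
      ← Real.rpow_mul (by positivity), show 2 / q * (1 / 2) = 1 / q by ring]
    ring
  refine (eLpNorm_le_of_forall_simpleFunc_norm_integral_inner_le hp.le hpq (by positivity) hu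
    hpair).trans_eq ?_
  rw [← mul_assoc, ← mul_assoc]

end WeightedPairing

section BesselWeight

variable {E : Type*} [NormedAddCommGroup E] {s : ℝ}

lemma one_le_one_add_norm_sq_rpow (hs : 0 ≤ s) (ξ : E) : 1 ≤ (1 + ‖ξ‖ ^ 2) ^ (s / 2) :=
  Real.one_le_rpow (le_add_of_nonneg_right (sq_nonneg _)) (by positivity)

lemma norm_rpow_le_one_add_norm_sq_rpow (hs : 0 ≤ s) (ξ : E) :
    ‖ξ‖ ^ s ≤ (1 + ‖ξ‖ ^ 2) ^ (s / 2) := calc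
  ‖ξ‖ ^ s = (‖ξ‖ ^ 2) ^ (s / 2) := by
    rw [← Real.rpow_natCast_mul (norm_nonneg _), Nat.cast_ofNat, mul_div_cancel₀ _ two_ne_zero]
  _ ≤ (1 + ‖ξ‖ ^ 2) ^ (s / 2) := by
    gcongr
    linarith

end BesselWeight

namespace Hs

variable {N : ℕ} {s : ℝ} {U : Hs N s}

lemma aestronglyMeasurable_hat (U : Hs N s) : AEStronglyMeasurable U.hat := by
  have hcont : Continuous fun ξ : Esp N ↦ (((1 + ‖ξ‖ ^ 2) ^ (-(s / 2)) : ℝ) : ℂ) :=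
    Complex.continuous_ofReal.comp
      (Continuous.rpow_const (by fun_prop) fun ξ ↦ Or.inl (by positivity))
  refine (hcont.aestronglyMeasurable.mul U.hat_mem.1).congr (ae_of_all _ fun ξ ↦ ?_)
  rw [Pi.mul_apply, ← mul_assoc, ← Complex.ofReal_mul, ← Real.rpow_add (by positivity),
    neg_add_cancel, Real.rpow_zero, Complex.ofReal_one, one_mul]

lemma memLp_hat (hs : 0 ≤ s) (U : Hs N s) : MemLp U.hat 2 := by
  refine U.hat_mem.mono U.aestronglyMeasurable_hat (ae_of_all _ fun ξ ↦ ?_)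
  rw [norm_mul, Complex.norm_of_nonneg (by positivity)]
  exact le_mul_of_one_le_left (norm_nonneg _) (one_le_one_add_norm_sq_rpow hs ξ)

lemma memLp_norm_rpow_sub_one_mul_hat (hs : 0 ≤ s) (U : Hs N s) :
    MemLp (fun ξ ↦ ((‖ξ‖ ^ s - 1 : ℝ) : ℂ) * U.hat ξ) 2 := by
  have hsymbol : Continuous fun ξ : Esp N ↦ ((‖ξ‖ ^ s - 1 : ℝ) : ℂ) :=
    Complex.continuous_ofReal.comp
      ((continuous_norm.rpow_const fun _ ↦ Or.inr hs).sub continuous_const)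
  refine U.hat_mem.mono (hsymbol.aestronglyMeasurable.mul U.aestronglyMeasurable_hat)
    (ae_of_all _ fun ξ ↦ ?_)
  rw [norm_mul, norm_mul, Complex.norm_real, Complex.norm_of_nonneg (by positivity)]
  gcongr
  rw [Real.norm_eq_abs, abs_le]
  have hpow : 0 ≤ ‖ξ‖ ^ s := by positivity
  constructor <;>
    linarith [one_le_one_add_norm_sq_rpow hs ξ, norm_rpow_le_one_add_norm_sq_rpow hs ξ]

lemma fourier_toLp (hs : 0 ≤ s) (U : Hs N s) :
    𝓕 (U.u_mem.toLp U.u) = (U.memLp_hat hs).toLp U.hat := by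
  refine fourier_toLp_of_integral_fourier_smul_eq U.u_mem (U.memLp_hat hs) fun φ ↦ ?_
  simp only [smul_eq_mul, mul_comm _ (U.u _), mul_comm _ (U.hat _)]
  exact U.fourier_spec φ

lemma eLpNorm_hat (hs : 0 ≤ s) (U : Hs N s) : eLpNorm U.hat 2 = eLpNorm U.u 2 := by
  have hnorm := Lp.norm_fourier_eq (U.u_mem.toLp U.u)
  rw [U.fourier_toLp hs, Lp.norm_toLp, Lp.norm_toLp] at hnorm
  exact (ENNReal.toReal_eq_toReal_iff' (U.memLp_hat hs).2.ne U.u_mem.2.ne).1 hnorm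

lemma Nontriv.eLpNorm_ne_zero (hU : U.Nontriv) : eLpNorm U.u 2 ≠ 0 :=
  mt (eLpNorm_eq_zero_iff U.u_mem.1 two_ne_zero).1 hU

lemma Nontriv.dNorm_ne_zero (hs : 0 < s) (hU : U.Nontriv) : dNorm U ≠ 0 := fun hzero ↦ by
  have hprod := (eLpNorm_eq_zero_iff (U.memLp_norm_rpow_sub_one_mul_hat hs.le).1
    two_ne_zero).1 hzero
  have hsphere : ∀ᵐ ξ : Esp N, ξ ∉ Metric.sphere (0 : Esp N) 1 :=
    measure_eq_zero_iff_ae_notMem.1 (Measure.addHaar_sphere_of_ne_zero volume 0 one_ne_zero)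
  refine hU.eLpNorm_ne_zero ?_
  rw [← U.eLpNorm_hat hs.le, eLpNorm_eq_zero_iff U.aestronglyMeasurable_hat two_ne_zero]
  filter_upwards [hprod, hsphere] with ξ hξ hξ₁
  refine (mul_eq_zero.1 hξ).resolve_left fun hsymbol ↦ hξ₁ ?_
  rw [Complex.ofReal_eq_zero, sub_eq_zero, ← Real.one_rpow s,
    Real.rpow_left_inj (norm_nonneg ξ) zero_le_one hs.ne'] at hsymbol
  rwa [mem_sphere_zero_iff_norm]

theorem exists_eLpNorm_le_mul {p κ R : ℝ} (hp : 2 < p) (hκ : 1 / 2 ≤ κ) (hκ₁ : κ < 1)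
    (hs : N * (1 / 2 - 1 / p) < s) (hκp : 1 - κ ≤ (N + 1) / 2 * (1 / 2 - 1 / p)) (hR : 0 < R) :
    ∃ M : ℝ, ∀ U : Hs N s, U.Nontriv → dNorm U ≤ ENNReal.ofReal R * eLpNorm U.u 2 →
      eLpNorm U.u (ENNReal.ofReal p) ≤
        ENNReal.ofReal M * (eLpNorm U.u 2 ^ κ * dNorm U ^ (1 - κ)) := by
  have hs₀ : 0 < s := lt_of_le_of_lt (mul_nonneg N.cast_nonneg
    (sub_nonneg.2 (one_div_le_one_div_of_le two_pos hp.le))) hs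
  obtain ⟨M, hM, hbound⟩ := exists_eLpNorm_le_of_fourier_toLp (E := Esp N) (s := s) hp hκ hκ₁
    (by rwa [finrank_euclideanSpace_fin]) (by rwa [finrank_euclideanSpace_fin]) hR
  refine ⟨M, fun U hU hUR ↦ ?_⟩
  have hsU := U.memLp_norm_rpow_sub_one_mul_hat hs₀.le
  have hu_top : eLpNorm U.u 2 ≠ ∞ := U.u_mem.2.ne
  have hd_top : dNorm U ≠ ∞ := hsU.2.ne
  have hratio : (dNorm U).toReal ≤ R * (eLpNorm U.u 2).toReal := by
    simpa only [ENNReal.toReal_mul, ENNReal.toReal_ofReal hR.le] using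
      ENNReal.toReal_mono (ENNReal.mul_ne_top ENNReal.ofReal_ne_top hu_top) hUR
  have hhat_sq : ∫ ξ, ‖U.hat ξ‖ ^ 2 = (eLpNorm U.u 2).toReal ^ 2 := by
    rw [integral_norm_sq_eq_toReal_eLpNorm_sq (U.memLp_hat hs₀.le), U.eLpNorm_hat hs₀.le]
  have hsymbol_sq : ∫ ξ, ‖((‖ξ‖ ^ s - 1 : ℝ) : ℂ) * U.hat ξ‖ ^ 2 = (dNorm U).toReal ^ 2 :=
    integral_norm_sq_eq_toReal_eLpNorm_sq hsU
  have hle := hbound U.u U.hat U.u_mem (U.memLp_hat hs₀.le) (U.fourier_toLp hs₀.le) hsU _ _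
    (ENNReal.toReal_pos hU.eLpNorm_ne_zero hu_top)
    (ENNReal.toReal_pos (hU.dNorm_ne_zero hs₀) hd_top) hratio hhat_sq hsymbol_sq
  rwa [ENNReal.ofReal_mul hM, ENNReal.ofReal_mul (by positivity),
    ← ENNReal.ofReal_rpow_of_nonneg ENNReal.toReal_nonneg (by linarith),
    ← ENNReal.ofReal_rpow_of_nonneg ENNReal.toReal_nonneg (by linarith),
    ENNReal.ofReal_toReal hu_top, ENNReal.ofReal_toReal hd_top] at hle

end Hs

/-- If `1/p > 1/2 - s/N`, `κ ≥ 1/2` and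
`1 - κ ≤ ((N+1)/2)(1/2 - 1/p)`, then for every `R > 0` the supremum of `Q_κ` over the
nonzero `u ∈ H^s(ℝ^N)` satisfying `‖(|D|^s - 1)u‖_{L²} ≤ R ‖u‖_{L²}` is finite. -/
theorem stmt3 (N : ℕ) (hN : 1 ≤ N) (s p κ : ℝ) (hs : 0 < s) (hp : 2 < p)
    (hκ0 : 0 < κ) (hκ1 : κ < 1)
    (h1 : 1 / 2 - s / (N : ℝ) < 1 / p) (h2 : 1 / 2 ≤ κ)
    (h3 : 1 - κ ≤ (((N : ℝ) + 1) / 2) * (1 / 2 - 1 / p)) :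
    ∀ R : ℝ, 0 < R →
      (⨆ (U : Hs N s) (_ : U.Nontriv ∧
          dNorm U ≤ ENNReal.ofReal R * eLpNorm U.u 2 (volume : Measure (Esp N))),
        Qquot p κ U) < ⊤ := by
  intro R hR
  have hN₀ : (0 : ℝ) < N := by exact_mod_cast hN
  have hsN : N * (1 / 2 - 1 / p) < s := by
    rw [mul_comm, ← lt_div_iff₀ hN₀]
    linarith
  obtain ⟨M, hM⟩ := Hs.exists_eLpNorm_le_mul hp h2 hκ1 hsN h3 hR
  exact (iSup₂_le fun U hU ↦ ENNReal.div_le_of_le_mul (hM U hU.1 hU.2)).trans_lt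
    ENNReal.ofReal_lt_top

end
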